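/- Let n ≥ 2, let Λ : ℕ → [0,1] be nonincreasing with Λ(0) = 1 and satisfying hypothesis H_Λ, and let μ be a probability measure on [0,1] satisfying hypothesis H_μ. Let m★ be the unique zero in F_n^+ of the mean field h, and for each ε ∈ (0,1) let ν^ε be an invariant probability measure of the SOM transition kernel P_ε with ν^ε(F_n^+) = 1. Then ν^ε converges weakly to the Dirac measure δ_{m★} as ε → 0. -/

import Mathlib

open MeasureTheory Set Filter Topology
open scoped Classical ENNReal

noncomputable section

/-- The winning unit: the smallest index `i` minimizing `|x - m i|`. -/
def winner {n : ℕ} [NeZero n] (m : Fin n → ℝ) (x : ℝ) : Fin n :=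
  (Finset.univ.filter fun i : Fin n => ∀ j, |x - m i| ≤ |x - m j|).min'
    (by
      obtain ⟨i, -, hi⟩ := Finset.exists_min_image (Finset.univ : Finset (Fin n))
        (fun i => |x - m i|) ⟨0, Finset.mem_univ _⟩
      exact ⟨i, Finset.mem_filter.mpr ⟨Finset.mem_univ _,
        fun j => hi j (Finset.mem_univ _)⟩⟩)

/-- One step of the one-dimensional SOM algorithm. -/
def somUpdate {n : ℕ} [NeZero n] (Λ : ℕ → ℝ) (ε : ℝ) (m : Fin n → ℝ) (x : ℝ) :
    Fin n → ℝ :=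
  fun i => m i - ε * Λ (Nat.dist i.1 (winner m x).1) * (m i - x)

/-- `F_n^+` : increasingly ordered states with values in `(0,1)`. -/
def Fplus (n : ℕ) : Set (Fin n → ℝ) :=
  {m | StrictMono m ∧ ∀ i, m i ∈ Set.Ioo (0 : ℝ) 1}

/-- `ν` is an invariant measure for the SOM transition kernel. -/
def IsSOMInvariant {n : ℕ} [NeZero n] (μ : Measure ℝ) (Λ : ℕ → ℝ) (ε : ℝ)
    (ν : Measure (Fin n → ℝ)) : Prop :=
  ν.bind (fun m => μ.map fun x => somUpdate Λ ε m x) = ν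

/-- The Voronoi boundary points `x_0 = 0`, `x_j = (m_j + m_{j+1})/2`, `x_n = 1`. -/
def somBnd {n : ℕ} (m : Fin n → ℝ) (j : ℕ) : ℝ :=
  if j = 0 then 0
  else if h : j < n then
    (m ⟨j - 1, lt_of_le_of_lt (Nat.sub_le j 1) h⟩ + m ⟨j, h⟩) / 2
  else 1

/-- The mean field of the one-dimensional SOM algorithm. -/
def meanField {n : ℕ} (Λ : ℕ → ℝ) (f : ℝ → ℝ) (m : Fin n → ℝ) : Fin n → ℝ :=
  fun i => ∑ j : Fin n, Λ (Nat.dist i.1 j.1) *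
    ∫ x in Set.Icc (somBnd m j.1) (somBnd m (j.1 + 1)), (m i - x) * f x

/-- Hypothesis `H_Λ`. -/
def HLambda (n : ℕ) (Λ : ℕ → ℝ) : Prop :=
  ∃ k₀ : ℕ, 2 * k₀ + 1 < n ∧ Λ (k₀ + 1) < Λ k₀

/-- Hypothesis `H_μ` on the density `f`. -/
def Hmu (f : ℝ → ℝ) : Prop :=
  (∀ x ∈ Set.Ioo (0 : ℝ) 1, 0 < f x) ∧
  (StrictConcaveOn ℝ (Set.Ioo (0 : ℝ) 1) (fun x => Real.log (f x)) ∨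
    (ConcaveOn ℝ (Set.Ioo (0 : ℝ) 1) (fun x => Real.log (f x)) ∧
      ∃ a b : ℝ, Tendsto f (nhdsWithin 0 (Set.Ioi 0)) (nhds a) ∧
        Tendsto f (nhdsWithin 1 (Set.Iio 1)) (nhds b) ∧ 0 < a + b))

/-! As `ε → 0`, invariance of `ν^ε` forces every weak limit `Q` of the `ν^ε` to satisfy
`∫ φ'(m) (h m) dQ = 0` for all `φ` of class `C¹`. Take for `φ` the smooth approximations
`β⁻¹ log ∑ exp (β ·)` of the sup norm of `m - m★`: as `β → ∞`, the integrand concentrates on the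
coordinates at which `|mᵢ - m★ᵢ|` is maximal. At such a coordinate `h` pushes `m` towards `m★`:
among the states below `m★ + t` with the same `i`-th coordinate, `hᵢ` is smallest at `m★ + t`
because `Λ` is nonincreasing, and translating `m★` by `t ≥ 0` cannot make `hᵢ` negative because the
density is log-concave. The integrand in the limit is therefore nonnegative, hence `Q`-almost
everywhere zero. For `m ≠ m★` the push is strict at some maximal coordinate, so `Q` is the Dirac
mass at `m★`. -/

theorem exists_succ_lt_of_lt {α : Type*} [LinearOrder α] {f : ℕ → α} {N : ℕ} (hN : f N < f 0) :
    ∃ k < N, f (k + 1) < f k := by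
  by_contra! h
  have hle (k : ℕ) (hk : k ≤ N) : f 0 ≤ f k := by
    induction k with
    | zero => rfl
    | succ k ih => exact (ih (Nat.le_of_succ_le hk)).trans (h k hk)
  exact hN.not_ge (hle N le_rfl)

section Integral

theorem integral_lt_integral_of_le_of_measure_ne_zero {α : Type*} [MeasurableSpace α]
    {μ : Measure α} {f g : α → ℝ} (hf : Integrable f μ) (hg : Integrable g μ) (hfg : f ≤ g)
    {s : Set α} (hs : μ s ≠ 0) (hlt : ∀ x ∈ s, f x < g x) : ∫ x, f x ∂μ < ∫ x, g x ∂μ := by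
  rw [← sub_pos, ← integral_sub hg hf,
    integral_pos_iff_support_of_nonneg (fun x => sub_nonneg.2 (hfg x)) (hg.sub hf)]
  exact (pos_iff_ne_zero.2 hs).trans_le (measure_mono fun x hx => (sub_pos.2 (hlt x hx)).ne')

theorem measure_Ioo_ne_zero {μ : Measure ℝ} {s : Set ℝ} (hμ : volume.restrict s ≪ μ) {a b : ℝ}
    (hab : a < b) (hs : Ioo a b ⊆ s) : μ (Ioo a b) ≠ 0 := fun h => by
  have hvol := hμ h
  rw [Measure.restrict_apply measurableSet_Ioo, inter_eq_left.2 hs, Real.volume_Ioo,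
    ENNReal.ofReal_eq_zero, sub_nonpos] at hvol
  exact hvol.not_gt hab

theorem integrable_of_continuous_of_ae_mem_isCompact {E F : Type*} [TopologicalSpace E]
    [MeasurableSpace E] [OpensMeasurableSpace E] [NormedAddCommGroup F]
    [SecondCountableTopologyEither E F] [TopologicalSpace.PseudoMetrizableSpace E] {ν : Measure E}
    [IsFiniteMeasure ν] {ψ : E → F} (hψ : Continuous ψ) {K : Set E} (hK : IsCompact K)
    (hν : ∀ᵐ m ∂ν, m ∈ K) : Integrable ψ ν := by
  obtain ⟨B, hB⟩ := hK.exists_bound_of_continuousOn hψ.continuousOn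
  exact (integrable_const B).mono' hψ.aestronglyMeasurable (hν.mono hB)

end Integral

section Voronoi

variable {n : ℕ}

theorem somBnd_succ (m : Fin n → ℝ) {j : ℕ} (hj : j + 1 < n) :
    somBnd m (j + 1) = (m ⟨j, j.lt_succ_self.trans hj⟩ + m ⟨j + 1, hj⟩) / 2 := by
  simp [somBnd, hj]

theorem somBnd_eq_one (m : Fin n → ℝ) {j : ℕ} (hj : n ≤ j + 1) : somBnd m (j + 1) = 1 := by
  simp [somBnd, hj.not_gt]

theorem continuous_somBnd (j : ℕ) : Continuous fun m : Fin n → ℝ => somBnd m j := by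
  unfold somBnd
  split_ifs <;> fun_prop

theorem somBnd_le_somBnd {m m' : Fin n → ℝ} (h : m ≤ m') (j : ℕ) : somBnd m j ≤ somBnd m' j := by
  unfold somBnd
  split_ifs with h0 hj
  · rfl
  · linarith [h ⟨j - 1, (j.sub_le 1).trans_lt hj⟩, h ⟨j, hj⟩]
  · rfl

theorem somBnd_add_const (m : Fin n → ℝ) (t : ℝ) {j : ℕ} (hj : j + 1 < n) :
    somBnd (fun i => m i + t) (j + 1) = somBnd m (j + 1) + t := by
  rw [somBnd_succ _ hj, somBnd_succ _ hj]
  ring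

variable {m : Fin n → ℝ}

theorem apply_le_somBnd (hm : Monotone m) {i : Fin n} {j : ℕ} (hij : i ≤ j) (hj : j + 1 < n) :
    m i ≤ somBnd m (j + 1) := by
  rw [somBnd_succ m hj]
  have h₁ : m i ≤ m ⟨j, j.lt_succ_self.trans hj⟩ := hm (Fin.le_def.2 hij)
  have h₂ : m i ≤ m ⟨j + 1, hj⟩ := hm (Fin.le_def.2 (hij.trans j.le_succ))
  linarith

theorem somBnd_le_apply (hm : Monotone m) {i : Fin n} {j : ℕ} (hij : j + 1 ≤ i) :
    somBnd m (j + 1) ≤ m i := by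
  have hj : j + 1 < n := hij.trans_lt i.2
  rw [somBnd_succ m hj]
  have h₁ : m ⟨j, j.lt_succ_self.trans hj⟩ ≤ m i := hm (Fin.le_def.2 (j.le_succ.trans hij))
  have h₂ : m ⟨j + 1, hj⟩ ≤ m i := hm (Fin.le_def.2 hij)
  linarith

theorem somBnd_lt_apply (hm : StrictMono m) {i : Fin n} {j : ℕ} (hij : j + 1 ≤ i) :
    somBnd m (j + 1) < m i := by
  have hj : j + 1 < n := hij.trans_lt i.2
  rw [somBnd_succ m hj]
  have h₁ : m ⟨j, j.lt_succ_self.trans hj⟩ < m i := hm (Fin.lt_def.2 hij)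
  have h₂ : m ⟨j + 1, hj⟩ ≤ m i := hm.monotone (Fin.le_def.2 hij)
  linarith

theorem somBnd_mono_right (hm : Monotone m) {j k : ℕ} (hjk : j ≤ k) (hk : k + 1 < n) :
    somBnd m (j + 1) ≤ somBnd m (k + 1) := by
  rcases hjk.eq_or_lt with rfl | h
  · rfl
  · exact (somBnd_le_apply hm (i := ⟨k, k.lt_succ_self.trans hk⟩) h).trans
      (apply_le_somBnd hm le_rfl hk)

/-- The index of the Voronoi cell containing `x`, counted as the number of interior cell boundaries
strictly below `x`. It is the winner for strictly increasing states, and unlike the winner it is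
monotone in the state, without any condition on ties. -/
def voronoiIndex (m : Fin n → ℝ) (x : ℝ) : ℕ :=
  ((Finset.range (n - 1)).filter fun j => somBnd m (j + 1) < x).card

theorem voronoiIndex_le (m : Fin n → ℝ) (x : ℝ) : voronoiIndex m x ≤ n - 1 :=
  (Finset.card_filter_le _ _).trans_eq (Finset.card_range _)

theorem voronoiIndex_anti {m m' : Fin n → ℝ} (h : m ≤ m') (x : ℝ) :
    voronoiIndex m' x ≤ voronoiIndex m x :=
  Finset.card_le_card <| Finset.monotone_filter_right _ fun j _ hj =>
    (somBnd_le_somBnd h (j + 1)).trans_lt hj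

theorem lt_voronoiIndex_iff (hm : Monotone m) {j : ℕ} (hj : j + 1 < n) {x : ℝ} :
    j < voronoiIndex m x ↔ somBnd m (j + 1) < x := by
  refine ⟨fun h => ?_, fun h => ?_⟩
  · by_contra! hx
    have hsub : (Finset.range (n - 1)).filter (fun k => somBnd m (k + 1) < x) ⊆
        Finset.range j := fun k hk => by
      rw [Finset.mem_filter, Finset.mem_range] at hk
      by_contra hkj
      rw [Finset.mem_range, not_lt] at hkj
      exact ((hx.trans (somBnd_mono_right hm hkj (by omega))).trans_lt hk.2).false
    exact h.not_ge ((Finset.card_le_card hsub).trans_eq (Finset.card_range j))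
  · have hsub : Finset.range (j + 1) ⊆
        (Finset.range (n - 1)).filter fun k => somBnd m (k + 1) < x := fun k hk => by
      rw [Finset.mem_range] at hk
      rw [Finset.mem_filter, Finset.mem_range]
      exact ⟨by omega, (somBnd_mono_right hm (by omega) hj).trans_lt h⟩
    exact (Finset.card_range (j + 1)).symm.trans_le (Finset.card_le_card hsub)

theorem voronoiIndex_le_of_le_apply (hm : Monotone m) {i : Fin n} {x : ℝ} (hx : x ≤ m i) :
    voronoiIndex m x ≤ i := by
  by_cases hi : i + 1 < n
  · rw [← not_lt, lt_voronoiIndex_iff hm hi, not_lt]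
    exact hx.trans (apply_le_somBnd hm le_rfl hi)
  · exact (voronoiIndex_le m x).trans (by omega)

theorem le_voronoiIndex_of_apply_lt (hm : Monotone m) {i : Fin n} {x : ℝ} (hx : m i < x) :
    i ≤ voronoiIndex m x := by
  obtain ⟨_ | j, hi⟩ := i
  · exact Nat.zero_le _
  · exact (lt_voronoiIndex_iff hm hi).2 ((somBnd_le_apply hm le_rfl).trans_lt hx)

theorem mem_Icc_somBnd_iff (hm : Monotone m) {x : ℝ} (hx : x ∈ Icc (0 : ℝ) 1)
    (hxm : ∀ j, somBnd m j ≠ x) (j : Fin n) :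
    x ∈ Icc (somBnd m j) (somBnd m (j + 1)) ↔ voronoiIndex m x = j := by
  have hlower : somBnd m j ≤ x ↔ j ≤ voronoiIndex m x := by
    obtain ⟨_ | k, hk⟩ := j
    · simp [somBnd, hx.1]
    · exact (hxm (k + 1)).le_iff_lt.trans (lt_voronoiIndex_iff hm hk).symm
  have hupper : x ≤ somBnd m (j + 1) ↔ voronoiIndex m x ≤ j := by
    by_cases hj : j + 1 < n
    · rw [← not_lt, ← lt_voronoiIndex_iff hm hj, not_lt]
    · rw [somBnd_eq_one m (not_lt.1 hj)]
      exact iff_of_true hx.2 ((voronoiIndex_le m x).trans (by omega))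
  rw [mem_Icc, hlower, hupper, and_comm, ← le_antisymm_iff]

theorem voronoiIndex_add_const (m : Fin n → ℝ) (x t : ℝ) :
    voronoiIndex (fun i => m i + t) (x + t) = voronoiIndex m x := by
  refine congrArg Finset.card (Finset.filter_congr fun j hj => ?_)
  rw [Finset.mem_range] at hj
  rw [somBnd_add_const m t (by omega), add_lt_add_iff_right]

theorem measurable_voronoiIndex :
    Measurable fun p : (Fin n → ℝ) × ℝ => voronoiIndex p.1 p.2 := by
  simp only [voronoiIndex, Finset.card_filter]
  refine Finset.measurable_fun_sum _ fun j _ => Measurable.ite ?_ measurable_const measurable_const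
  exact measurableSet_lt ((continuous_somBnd (j + 1)).measurable.comp measurable_fst) measurable_snd

theorem eventually_voronoiIndex_eq {x : ℝ} (hx : ∀ j, somBnd m j ≠ x) :
    ∀ᶠ m' in 𝓝 m, voronoiIndex m' x = voronoiIndex m x := by
  have h : ∀ᶠ m' in 𝓝 m, ∀ j ∈ Finset.range (n - 1),
      somBnd m' (j + 1) < x ↔ somBnd m (j + 1) < x := by
    refine (Filter.eventually_all_finset _).2 fun j _ => ?_
    have hcont := (continuous_somBnd (n := n) (j + 1)).continuousAt (x := m)
    rcases (hx (j + 1)).lt_or_gt with hj | hj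
    · exact (hcont.eventually_lt_const hj).mono fun m' hm' => iff_of_true hm' hj
    · exact (hcont.eventually_const_lt hj).mono fun m' hm' => iff_of_false hm'.not_gt hj.not_gt
  exact h.mono fun m' hm' => congrArg Finset.card (Finset.filter_congr hm')

theorem ae_somBnd_ne (μ : Measure ℝ) [NullSingletonClass μ] (m : Fin n → ℝ) :
    ∀ᵐ x ∂μ, ∀ j, somBnd m j ≠ x :=
  ae_all_iff.2 fun j => (measure_eq_zero_iff_ae_notMem.1 (measure_singleton (somBnd m j))).mono
    fun _ hx h => hx h.symm

theorem abs_sub_winner_le [NeZero n] (m : Fin n → ℝ) (x : ℝ) (j : Fin n) :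
    |x - m (winner m x)| ≤ |x - m j| :=
  (Finset.mem_filter.1 (Finset.min'_mem
    (Finset.univ.filter fun i : Fin n => ∀ j, |x - m i| ≤ |x - m j|) _)).2 j

theorem abs_sub_winner_lt [NeZero n] (m : Fin n → ℝ) {x : ℝ} {j : Fin n} (hj : j < winner m x) :
    |x - m (winner m x)| < |x - m j| := by
  by_contra! h
  exact hj.not_ge (Finset.min'_le _ _
    (Finset.mem_filter.2 ⟨Finset.mem_univ j, fun k => h.trans (abs_sub_winner_le m x k)⟩))

theorem winner_eq_voronoiIndex [NeZero n] (hm : StrictMono m) (x : ℝ) :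
    (winner m x : ℕ) = voronoiIndex m x := by
  have hle := abs_sub_winner_le m x
  have hlt := fun j => abs_sub_winner_lt m (x := x) (j := j)
  generalize winner m x = w at hle hlt
  apply le_antisymm
  · obtain ⟨_ | k, hw⟩ := w
    · exact Nat.zero_le _
    · refine (lt_voronoiIndex_iff hm.monotone hw).2 ?_
      rw [somBnd_succ m hw]
      have hkw : (⟨k, k.lt_succ_self.trans hw⟩ : Fin n) < ⟨k + 1, hw⟩ := Fin.lt_def.2 k.lt_succ_self
      nlinarith [sq_lt_sq.2 (hlt _ hkw), hm hkw]
  · by_cases hw : w + 1 < n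
    · rw [← not_lt, lt_voronoiIndex_iff hm.monotone hw, not_lt, somBnd_succ m hw]
      have hkw : w < ⟨w + 1, hw⟩ := Fin.lt_def.2 (Nat.lt_succ_self _)
      simp only [Fin.eta]
      nlinarith [sq_le_sq.2 (hle ⟨w + 1, hw⟩), hm hkw]
    · exact (voronoiIndex_le m x).trans (by omega)

end Voronoi

section Drift

variable {n : ℕ} {Λ : ℕ → ℝ} {μ : Measure ℝ}

/-- The direction of one step of the algorithm: `T_ε(m, x) = m - ε • somDrift Λ m x` for strictly
increasing `m`. It is defined through the Voronoi index, so that its mean is continuous in `m` even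
where units coincide. -/
def somDrift (Λ : ℕ → ℝ) (m : Fin n → ℝ) (x : ℝ) : Fin n → ℝ :=
  fun i => Λ (Nat.dist i (voronoiIndex m x)) * (m i - x)

/-- The average of the drift over the input; it extends the mean field `h` of the algorithm
continuously from `F_n^+` to all states, for an arbitrary distribution `μ` of the inputs. -/
def meanDrift (Λ : ℕ → ℝ) (μ : Measure ℝ) (m : Fin n → ℝ) : Fin n → ℝ :=
  ∫ x, somDrift Λ m x ∂μ

theorem somUpdate_eq_sub_smul_somDrift [NeZero n] {m : Fin n → ℝ} (hm : StrictMono m) (ε x : ℝ) :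
    somUpdate Λ ε m x = m - ε • somDrift Λ m x := by
  ext i
  simp [somUpdate, somDrift, winner_eq_voronoiIndex hm, mul_assoc]

theorem measurable_somDrift : Measurable fun p : (Fin n → ℝ) × ℝ => somDrift Λ p.1 p.2 := by
  refine measurable_pi_lambda _ fun i => ?_
  have hΛ : Measurable fun k => Λ (Nat.dist i k) := measurable_from_top
  exact (hΛ.comp measurable_voronoiIndex).mul
    (((measurable_pi_apply i).comp measurable_fst).sub measurable_snd)

theorem aestronglyMeasurable_somDrift (m : Fin n → ℝ) :
    AEStronglyMeasurable (somDrift Λ m) μ :=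
  (measurable_somDrift.comp measurable_prodMk_left).aestronglyMeasurable

theorem norm_somDrift_le (hΛ : ∀ k, Λ k ∈ Icc (0 : ℝ) 1) (m : Fin n → ℝ) {x : ℝ}
    (hx : x ∈ Icc (0 : ℝ) 1) : ‖somDrift Λ m x‖ ≤ ‖m‖ + 1 := by
  refine (pi_norm_le_iff_of_nonneg (by positivity)).2 fun i => ?_
  have hΛi := hΛ (Nat.dist i (voronoiIndex m x))
  have hx' : ‖x‖ ≤ 1 := (Real.norm_of_nonneg hx.1).trans_le hx.2
  calc ‖somDrift Λ m x i‖ = Λ (Nat.dist i (voronoiIndex m x)) * ‖m i - x‖ := by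
        rw [somDrift, norm_mul, Real.norm_of_nonneg hΛi.1]
    _ ≤ ‖m i - x‖ := mul_le_of_le_one_left (norm_nonneg _) hΛi.2
    _ ≤ ‖m‖ + 1 := (norm_sub_le _ _).trans (add_le_add (norm_le_pi_norm m i) hx')

theorem integrable_somDrift (hΛ : ∀ k, Λ k ∈ Icc (0 : ℝ) 1) [IsFiniteMeasure μ]
    (hμ : ∀ᵐ x ∂μ, x ∈ Icc (0 : ℝ) 1) (m : Fin n → ℝ) : Integrable (somDrift Λ m) μ :=
  (integrable_const (‖m‖ + 1)).mono' (aestronglyMeasurable_somDrift m)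
    (hμ.mono fun _ hx => norm_somDrift_le hΛ m hx)

theorem meanDrift_apply (hΛ : ∀ k, Λ k ∈ Icc (0 : ℝ) 1) [IsFiniteMeasure μ]
    (hμ : ∀ᵐ x ∂μ, x ∈ Icc (0 : ℝ) 1) (m : Fin n → ℝ) (i : Fin n) :
    meanDrift Λ μ m i = ∫ x, somDrift Λ m x i ∂μ :=
  eval_integral (fun j => (integrable_somDrift hΛ hμ m).eval j) i

theorem continuous_meanDrift (hΛ : ∀ k, Λ k ∈ Icc (0 : ℝ) 1) [IsFiniteMeasure μ]
    [NullSingletonClass μ] (hμ : ∀ᵐ x ∂μ, x ∈ Icc (0 : ℝ) 1) :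
    Continuous (meanDrift Λ μ : (Fin n → ℝ) → Fin n → ℝ) := by
  refine continuous_iff_continuousAt.2 fun m => ?_
  refine continuousAt_of_dominated (bound := fun _ => ‖m‖ + 2)
    (Eventually.of_forall aestronglyMeasurable_somDrift) ?_ (integrable_const _) ?_
  · filter_upwards [continuous_norm.continuousAt.eventually_lt_const (lt_add_one ‖m‖)] with m' hm'
    filter_upwards [hμ] with x hx
    linarith [norm_somDrift_le hΛ m' hx]
  · filter_upwards [ae_somBnd_ne μ m] with x hx
    have hcont : Continuous fun (m' : Fin n → ℝ) (i : Fin n) =>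
        Λ (Nat.dist i (voronoiIndex m x)) * (m' i - x) := by fun_prop
    refine hcont.continuousAt.congr ?_
    filter_upwards [eventually_voronoiIndex_eq hx] with m' hm'
    rw [← hm']
    rfl

theorem somDrift_eq_sum_indicator {m : Fin n → ℝ} (hm : Monotone m) {x : ℝ}
    (hx : x ∈ Icc (0 : ℝ) 1) (hxm : ∀ j, somBnd m j ≠ x) (i : Fin n) :
    somDrift Λ m x i = ∑ j : Fin n, Λ (Nat.dist i j) *
      (Icc (somBnd m j) (somBnd m (j + 1))).indicator (fun x => m i - x) x := by
  have hlt : voronoiIndex m x < n := (voronoiIndex_le m x).trans_lt (by have := i.2; omega)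
  rw [Finset.sum_eq_single (⟨voronoiIndex m x, hlt⟩ : Fin n)]
  · rw [indicator_of_mem ((mem_Icc_somBnd_iff hm hx hxm _).2 rfl)]
    rfl
  · intro j _ hj
    rw [indicator_of_notMem, mul_zero]
    exact fun h => hj (Fin.ext ((mem_Icc_somBnd_iff hm hx hxm j).1 h).symm)
  · exact fun h => absurd (Finset.mem_univ _) h

theorem meanDrift_apply_eq_sum (hΛ : ∀ k, Λ k ∈ Icc (0 : ℝ) 1) [IsFiniteMeasure μ]
    [NullSingletonClass μ] (hμ : ∀ᵐ x ∂μ, x ∈ Icc (0 : ℝ) 1) {m : Fin n → ℝ} (hm : Monotone m)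
    (i : Fin n) :
    meanDrift Λ μ m i = ∑ j : Fin n, Λ (Nat.dist i j) *
      ∫ x in Icc (somBnd m j) (somBnd m (j + 1)), (m i - x) ∂μ := by
  have hint : Integrable (fun x => m i - x) μ := by
    refine (integrable_const (|m i| + 1)).mono' (by fun_prop) (hμ.mono fun x hx => ?_)
    exact (norm_sub_le _ _).trans (add_le_add le_rfl ((Real.norm_of_nonneg hx.1).trans_le hx.2))
  calc meanDrift Λ μ m i
      = ∫ x, ∑ j : Fin n, Λ (Nat.dist i j) *
          (Icc (somBnd m j) (somBnd m (j + 1))).indicator (fun x => m i - x) x ∂μ := by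
        rw [meanDrift_apply hΛ hμ]
        refine integral_congr_ae ?_
        filter_upwards [hμ, ae_somBnd_ne μ m] with x hx hxm
        exact somDrift_eq_sum_indicator hm hx hxm i
    _ = _ := by
        rw [integral_finsetSum _ fun j _ => (hint.indicator measurableSet_Icc).const_mul _]
        simp only [integral_const_mul, integral_indicator measurableSet_Icc]

theorem meanField_eq_meanDrift (hΛ : ∀ k, Λ k ∈ Icc (0 : ℝ) 1) [IsFiniteMeasure μ]
    (hμ : ∀ᵐ x ∂μ, x ∈ Icc (0 : ℝ) 1) {f : ℝ → ℝ} (hf : AEMeasurable f) (hf0 : 0 ≤ᵐ[volume] f)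
    (hdens : μ = volume.withDensity fun x => ENNReal.ofReal (f x)) {m : Fin n → ℝ}
    (hm : Monotone m) : meanField Λ f m = meanDrift Λ μ m := by
  have : NullSingletonClass μ := by rw [hdens]; infer_instance
  ext i
  rw [meanDrift_apply_eq_sum hΛ hμ hm]
  refine Finset.sum_congr rfl fun j _ => congrArg _ ?_
  rw [hdens, setIntegral_withDensity_eq_setIntegral_toReal_smul₀ hf.ennreal_ofReal.restrict
    (ae_of_all _ fun _ => ENNReal.ofReal_lt_top) _ measurableSet_Icc]
  refine integral_congr_ae (ae_restrict_of_ae (hf0.mono fun x hx => ?_))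
  simp [ENNReal.toReal_ofReal hx, mul_comm]

end Drift

section Comparison

variable {n : ℕ} {Λ : ℕ → ℝ} {μ : Measure ℝ} {m m' : Fin n → ℝ} {i : Fin n}

/- On either side of `m i`, raising the other units lowers the index of the winner: this moves the
winner away from `i` when `x < m i` and towards `i` when `m i < x`. -/
theorem somDrift_apply_le (hΛ : Antitone Λ) (hm : Monotone m) (hm' : Monotone m') (h : m ≤ m')
    (hi : m i = m' i) (x : ℝ) : somDrift Λ m' x i ≤ somDrift Λ m x i := by
  have hidx := voronoiIndex_anti h x
  simp only [somDrift, ← hi]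
  rcases le_or_gt x (m i) with hx | hx
  · have hle := voronoiIndex_le_of_le_apply hm hx
    refine mul_le_mul_of_nonneg_right (hΛ ?_) (sub_nonneg.2 hx)
    rw [Nat.dist_eq_sub_of_le_right hle, Nat.dist_eq_sub_of_le_right (hidx.trans hle)]
    omega
  · have hle := le_voronoiIndex_of_apply_lt hm' (hi ▸ hx)
    refine mul_le_mul_of_nonpos_right (hΛ ?_) (sub_nonpos.2 hx.le)
    rw [Nat.dist_eq_sub_of_le hle, Nat.dist_eq_sub_of_le (hle.trans hidx)]
    omega

theorem somDrift_apply_lt (hΛ : Antitone Λ) (hm : Monotone m) (hm' : StrictMono m')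
    (hi : m i = m' i) {k l : ℕ} (hk : Λ (k + 1) < Λ k) (hl : l + (k + 1) = i) {x : ℝ}
    (hx : x ∈ Ioc (somBnd m (l + 1)) (somBnd m' (l + 1))) :
    somDrift Λ m' x i < somDrift Λ m x i := by
  have hln : l + 1 < n := by omega
  have hxi : x < m i := hi ▸ hx.2.trans_lt (somBnd_lt_apply hm' (by omega))
  have hidx : l < voronoiIndex m x := (lt_voronoiIndex_iff hm hln).2 hx.1
  have hidx' : voronoiIndex m' x ≤ l := by
    rw [← not_lt, lt_voronoiIndex_iff hm'.monotone hln, not_lt]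
    exact hx.2
  have hle := voronoiIndex_le_of_le_apply hm hxi.le
  simp only [somDrift, ← hi]
  refine mul_lt_mul_of_pos_right ?_ (sub_pos.2 hxi)
  rw [Nat.dist_eq_sub_of_le_right hle, Nat.dist_eq_sub_of_le_right (by omega)]
  calc Λ (i - voronoiIndex m' x) ≤ Λ (k + 1) := hΛ (by omega)
    _ < Λ k := hk
    _ ≤ Λ (i - voronoiIndex m x) := hΛ (by omega)

variable [IsFiniteMeasure μ]

theorem meanDrift_apply_le (hΛ : ∀ k, Λ k ∈ Icc (0 : ℝ) 1) (hΛanti : Antitone Λ)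
    (hμ : ∀ᵐ x ∂μ, x ∈ Icc (0 : ℝ) 1) (hm : Monotone m) (hm' : Monotone m') (h : m ≤ m')
    (hi : m i = m' i) : meanDrift Λ μ m' i ≤ meanDrift Λ μ m i := by
  rw [meanDrift_apply hΛ hμ, meanDrift_apply hΛ hμ]
  exact integral_mono ((integrable_somDrift hΛ hμ m').eval i) ((integrable_somDrift hΛ hμ m).eval i)
    (somDrift_apply_le hΛanti hm hm' h hi)

theorem meanDrift_apply_lt (hΛ : ∀ k, Λ k ∈ Icc (0 : ℝ) 1) (hΛanti : Antitone Λ)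
    (hμ : ∀ᵐ x ∂μ, x ∈ Icc (0 : ℝ) 1) (hμpos : volume.restrict (Ioo 0 1) ≪ μ)
    (hm : Monotone m) (hm' : StrictMono m') (h : m ≤ m') (hi : m i = m' i) (hi1 : m i ≤ 1)
    {l : Fin n} (hl0 : 0 < m' l) (hlt : m l < m' l) {k : ℕ} (hk : Λ (k + 1) < Λ k)
    (hl : l + (k + 1) = i) : meanDrift Λ μ m' i < meanDrift Λ μ m i := by
  have hln : l + 1 < n := by omega
  have hbnd1 : somBnd m' (l + 1) ≤ 1 := (somBnd_lt_apply hm' (by omega)).le.trans (hi ▸ hi1)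
  have hbnd : max 0 (somBnd m (l + 1)) < somBnd m' (l + 1) := by
    have h₁ : m' l < m' ⟨l + 1, hln⟩ := hm' (Fin.lt_def.2 (Nat.lt_succ_self _))
    have h₂ : m ⟨l + 1, hln⟩ ≤ m' ⟨l + 1, hln⟩ := h _
    rw [max_lt_iff, somBnd_succ m hln, somBnd_succ m' hln]
    constructor <;> linarith
  rw [meanDrift_apply hΛ hμ, meanDrift_apply hΛ hμ]
  refine integral_lt_integral_of_le_of_measure_ne_zero ((integrable_somDrift hΛ hμ m').eval i)
    ((integrable_somDrift hΛ hμ m).eval i) (somDrift_apply_le hΛanti hm hm'.monotone h hi)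
    (measure_Ioo_ne_zero hμpos hbnd (Ioo_subset_Ioo (le_max_left _ _) hbnd1)) fun x hx => ?_
  exact somDrift_apply_lt hΛanti hm hm' hi hk hl ⟨(le_max_right _ _).trans_lt hx.1, hx.2.le⟩

end Comparison

section LogConcave

theorem concaveOn_add_le_add {s : Set ℝ} {g : ℝ → ℝ} (hg : ConcaveOn ℝ s g) {y z t : ℝ}
    (hy : y ∈ s) (hzt : z + t ∈ s) (hyz : y ≤ z) (ht : 0 ≤ t) :
    g y + g (z + t) ≤ g (y + t) + g z := by
  rcases (show y ≤ z + t by linarith).eq_or_lt with h | h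
  · obtain rfl : z = y := by linarith
    obtain rfl : t = 0 := by linarith
    simp
  · have hd : 0 < z + t - y := sub_pos.2 h
    set a := t / (z + t - y)
    set b := (z - y) / (z + t - y)
    have ha : 0 ≤ a := by positivity
    have hb : 0 ≤ b := div_nonneg (sub_nonneg.2 hyz) hd.le
    have hab : b + a = 1 := by simp only [a, b]; field_simp; ring
    have h₁ := hg.2 hy hzt hb ha hab
    have h₂ := hg.2 hy hzt ha hb (by rwa [add_comm])
    have hyt : b • y + a • (z + t) = y + t := by simp only [a, b, smul_eq_mul]; field_simp; ring
    have hz : a • y + b • (z + t) = z := by simp only [a, b, smul_eq_mul]; field_simp; ring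
    rw [hyt] at h₁
    rw [hz] at h₂
    simp only [smul_eq_mul] at h₁ h₂
    linear_combination h₁ + h₂ - (g y + g (z + t)) * hab

/-- The distribution `μ` has a density `f`, positive and log-concave on `(0,1)` and normalized to
vanish outside `(0,1)`, so that log-concavity holds in product form on the whole line. -/
structure HasLogConcaveDensity (μ : Measure ℝ) (f : ℝ → ℝ) : Prop where
  eq_withDensity : μ = volume.withDensity fun x => ENNReal.ofReal (f x)
  pos : ∀ x ∈ Ioo (0 : ℝ) 1, 0 < f x
  eq_zero : ∀ x ∉ Ioo (0 : ℝ) 1, f x = 0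
  concaveOn_log : ConcaveOn ℝ (Ioo 0 1) fun x => Real.log (f x)

namespace HasLogConcaveDensity

variable {μ : Measure ℝ} {f : ℝ → ℝ}

theorem nonneg (hf : HasLogConcaveDensity μ f) (x : ℝ) : 0 ≤ f x := by
  by_cases hx : x ∈ Ioo (0 : ℝ) 1
  · exact (hf.pos x hx).le
  · exact (hf.eq_zero x hx).ge

theorem measurable (hf : HasLogConcaveDensity μ f) : Measurable f := by
  have hcont : ContinuousOn f (Ioo 0 1) :=
    (Real.continuous_exp.comp_continuousOn (hf.concaveOn_log.continuousOn isOpen_Ioo)).congr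
      fun x hx => (Real.exp_log (hf.pos x hx)).symm
  have heq : (Ioo 0 1).piecewise f 0 = f := by
    rw [piecewise_eq_indicator, indicator_eq_self]
    exact fun x hx => by_contra fun h => hx (hf.eq_zero x h)
  exact heq ▸ hcont.measurable_piecewise continuousOn_const measurableSet_Ioo

theorem integral_eq (hf : HasLogConcaveDensity μ f) (g : ℝ → ℝ) : ∫ x, g x ∂μ = ∫ x, g x * f x := by
  rw [hf.eq_withDensity, integral_withDensity_eq_integral_toReal_smul
    hf.measurable.ennreal_ofReal (ae_of_all _ fun _ => ENNReal.ofReal_lt_top)]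
  simp only [ENNReal.toReal_ofReal (hf.nonneg _), smul_eq_mul, mul_comm]

theorem integrable_iff (hf : HasLogConcaveDensity μ f) {g : ℝ → ℝ} :
    Integrable g μ ↔ Integrable fun x => g x * f x := by
  rw [hf.eq_withDensity, integrable_withDensity_iff hf.measurable.ennreal_ofReal
    (ae_of_all _ fun _ => ENNReal.ofReal_lt_top)]
  simp only [ENNReal.toReal_ofReal (hf.nonneg _)]

theorem nullSingletonClass (hf : HasLogConcaveDensity μ f) : NullSingletonClass μ := by
  rw [hf.eq_withDensity]
  infer_instance

theorem ae_mem_Ioo (hf : HasLogConcaveDensity μ f) : ∀ᵐ x ∂μ, x ∈ Ioo (0 : ℝ) 1 := by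
  rw [hf.eq_withDensity, ae_withDensity_iff hf.measurable.ennreal_ofReal]
  refine ae_of_all _ fun x hx => by_contra fun h => hx ?_
  rw [hf.eq_zero x h, ENNReal.ofReal_zero]

theorem ae_mem_Icc (hf : HasLogConcaveDensity μ f) : ∀ᵐ x ∂μ, x ∈ Icc (0 : ℝ) 1 :=
  hf.ae_mem_Ioo.mono fun _ hx => Ioo_subset_Icc_self hx

theorem restrict_absolutelyContinuous (hf : HasLogConcaveDensity μ f) :
    volume.restrict (Ioo 0 1) ≪ μ := by
  rw [hf.eq_withDensity]
  refine Measure.AbsolutelyContinuous.mk fun s hs h => ?_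
  rw [withDensity_apply_eq_zero hf.measurable.ennreal_ofReal] at h
  rw [Measure.restrict_apply hs]
  refine measure_mono_null (fun x hx => ?_) h
  exact ⟨(ENNReal.ofReal_pos.2 (hf.pos x hx.2)).ne', hx.1⟩

theorem mul_le_mul (hf : HasLogConcaveDensity μ f) {y z t : ℝ} (hyz : y ≤ z) (ht : 0 ≤ t) :
    f y * f (z + t) ≤ f (y + t) * f z := by
  by_cases hy : y ∈ Ioo (0 : ℝ) 1
  swap
  · rw [hf.eq_zero y hy, zero_mul]
    exact mul_nonneg (hf.nonneg _) (hf.nonneg _)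
  by_cases hzt : z + t ∈ Ioo (0 : ℝ) 1
  swap
  · rw [hf.eq_zero _ hzt, mul_zero]
    exact mul_nonneg (hf.nonneg _) (hf.nonneg _)
  have hyt := hf.pos (y + t) ⟨by linarith [hy.1], by linarith [hzt.2]⟩
  have hz := hf.pos z ⟨by linarith [hy.1], by linarith [hzt.2]⟩
  have hy' := hf.pos y hy
  have hzt' := hf.pos _ hzt
  rw [← Real.log_le_log_iff (by positivity) (by positivity), Real.log_mul hy'.ne' hzt'.ne',
    Real.log_mul hyt.ne' hz.ne']
  exact concaveOn_add_le_add hf.concaveOn_log hy hzt hyz ht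

theorem map_one_sub (hf : HasLogConcaveDensity μ f) :
    HasLogConcaveDensity (μ.map fun x => 1 - x) fun x => f (1 - x) where
  eq_withDensity := by
    ext s hs
    have hmp : MeasurePreserving (fun x : ℝ => 1 - x) := Measure.measurePreserving_sub_left volume 1
    have hg := (hf.measurable.comp hmp.measurable).ennreal_ofReal
    rw [Measure.map_apply hmp.measurable hs, hf.eq_withDensity,
      withDensity_apply _ (hmp.measurable hs), withDensity_apply _ hs]
    refine Eq.trans ?_ (hmp.setLIntegral_comp_preimage hs hg)
    simp only [sub_sub_cancel]
  pos x hx := hf.pos _ (Ioo.one_sub_mem hx)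
  eq_zero x hx := hf.eq_zero _ fun h => hx (by simpa using Ioo.one_sub_mem h)
  concaveOn_log :=
    (hf.concaveOn_log.comp_affineMap (AffineEquiv.constVSub ℝ (1 : ℝ)).toAffineMap).subset
      (fun _ hx => Ioo.one_sub_mem hx) (convex_Ioo 0 1)

end HasLogConcaveDensity

theorem indicator_Ioo_ae_eq {f : ℝ → ℝ} {a b : ℝ} (hf : ∀ x ∉ Icc a b, f x = 0) :
    (Ioo a b).indicator f =ᵐ[volume] f := by
  have hIcc : (Icc a b).indicator f = f :=
    indicator_eq_self.2 fun x hx => by_contra fun h => hx (hf x h)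
  exact (indicator_ae_eq_of_ae_eq_set Ioo_ae_eq_Icc).trans hIcc.eventuallyEq

theorem hasLogConcaveDensity_indicator {μ : Measure ℝ} {f : ℝ → ℝ}
    (hμ : μ = volume.withDensity fun x => ENNReal.ofReal (f x))
    (hsupp : ∀ x ∉ Icc (0 : ℝ) 1, f x = 0) (hpos : ∀ x ∈ Ioo (0 : ℝ) 1, 0 < f x)
    (hlog : ConcaveOn ℝ (Ioo 0 1) fun x => Real.log (f x)) :
    HasLogConcaveDensity μ ((Ioo 0 1).indicator f) where
  eq_withDensity := hμ.trans <| withDensity_congr_ae <|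
    (indicator_Ioo_ae_eq hsupp).symm.fun_comp fun y => ENNReal.ofReal y
  pos x hx := by rw [indicator_of_mem hx]; exact hpos x hx
  eq_zero x hx := indicator_of_notMem hx f
  concaveOn_log := hlog.congr fun x hx => by rw [indicator_of_mem hx]

end LogConcave

section Translation

variable {n : ℕ} {Λ : ℕ → ℝ} {μ : Measure ℝ} {f : ℝ → ℝ}

theorem somDrift_add_const (m : Fin n → ℝ) (x t : ℝ) :
    somDrift Λ (fun j => m j + t) (x + t) = somDrift Λ m x := by
  ext i
  simp only [somDrift, voronoiIndex_add_const, add_sub_add_right_eq_sub]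

theorem somDrift_mul_add_le (hΛ : ∀ k, Λ k ∈ Icc (0 : ℝ) 1) (hf : HasLogConcaveDensity μ f)
    (m : Fin n → ℝ) (i : Fin n) {t : ℝ} (ht : 0 ≤ t) (x : ℝ) :
    f (m i + t) * (somDrift Λ m x i * f x) ≤ f (m i) * (somDrift Λ m x i * f (x + t)) := by
  have hw := (hΛ (Nat.dist i (voronoiIndex m x))).1
  simp only [somDrift]
  rcases le_total x (m i) with hx | hx
  · linear_combination mul_le_mul_of_nonneg_left (hf.mul_le_mul hx ht)
      (mul_nonneg hw (sub_nonneg.2 hx))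
  · linear_combination mul_le_mul_of_nonneg_left (hf.mul_le_mul hx ht)
      (mul_nonneg hw (sub_nonneg.2 hx))

variable [IsFiniteMeasure μ]

theorem meanDrift_apply_eq_integral_mul (hΛ : ∀ k, Λ k ∈ Icc (0 : ℝ) 1)
    (hf : HasLogConcaveDensity μ f) (m : Fin n → ℝ) (i : Fin n) :
    meanDrift Λ μ m i = ∫ x, somDrift Λ m x i * f x := by
  rw [meanDrift_apply hΛ hf.ae_mem_Icc, hf.integral_eq]

theorem integrable_somDrift_mul (hΛ : ∀ k, Λ k ∈ Icc (0 : ℝ) 1)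
    (hf : HasLogConcaveDensity μ f) (m : Fin n → ℝ) (i : Fin n) :
    Integrable fun x => somDrift Λ m x i * f x :=
  hf.integrable_iff.1 ((integrable_somDrift hΛ hf.ae_mem_Icc m).eval i)

theorem meanDrift_add_const_apply (hΛ : ∀ k, Λ k ∈ Icc (0 : ℝ) 1)
    (hf : HasLogConcaveDensity μ f) (m : Fin n → ℝ) (t : ℝ) (i : Fin n) :
    meanDrift Λ μ (fun j => m j + t) i = ∫ x, somDrift Λ m x i * f (x + t) := by
  rw [meanDrift_apply_eq_integral_mul hΛ hf, ← integral_add_right_eq_self _ t]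
  simp only [somDrift_add_const]

theorem integrable_somDrift_mul_add (hΛ : ∀ k, Λ k ∈ Icc (0 : ℝ) 1)
    (hf : HasLogConcaveDensity μ f) (m : Fin n → ℝ) (t : ℝ) (i : Fin n) :
    Integrable fun x => somDrift Λ m x i * f (x + t) := by
  simpa only [somDrift_add_const] using
    (integrable_somDrift_mul hΛ hf (fun j => m j + t) i).comp_add_right t

theorem mul_meanDrift_le (hΛ : ∀ k, Λ k ∈ Icc (0 : ℝ) 1) (hf : HasLogConcaveDensity μ f)
    (m : Fin n → ℝ) (i : Fin n) {t : ℝ} (ht : 0 ≤ t) :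
    f (m i + t) * meanDrift Λ μ m i ≤ f (m i) * meanDrift Λ μ (fun j => m j + t) i := by
  rw [meanDrift_add_const_apply hΛ hf, meanDrift_apply_eq_integral_mul hΛ hf,
    ← integral_const_mul, ← integral_const_mul]
  exact integral_mono ((integrable_somDrift_mul hΛ hf m i).const_mul _)
    ((integrable_somDrift_mul_add hΛ hf m t i).const_mul _) (somDrift_mul_add_le hΛ hf m i ht)

/- The translated density charges inputs below `0`, all of which are won by the first unit; this is
where the inequality becomes strict. -/
theorem mul_meanDrift_lt (hΛ : ∀ k, Λ k ∈ Icc (0 : ℝ) 1) (hf : HasLogConcaveDensity μ f)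
    {m : Fin n → ℝ} (hm : m ∈ Fplus n) {i : Fin n} (hΛi : 0 < Λ i) {t : ℝ} (ht : 0 < t) :
    f (m i + t) * meanDrift Λ μ m i < f (m i) * meanDrift Λ μ (fun j => m j + t) i := by
  rw [meanDrift_add_const_apply hΛ hf, meanDrift_apply_eq_integral_mul hΛ hf,
    ← integral_const_mul, ← integral_const_mul]
  have hne : -t < min 0 (1 - t) := lt_min (neg_lt_zero.2 ht) (by linarith)
  refine integral_lt_integral_of_le_of_measure_ne_zero
    ((integrable_somDrift_mul hΛ hf m i).const_mul _)
    ((integrable_somDrift_mul_add hΛ hf m t i).const_mul _) (somDrift_mul_add_le hΛ hf m i ht.le)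
    (s := Ioo (-t) (min 0 (1 - t))) ((Measure.measure_Ioo_pos volume).2 hne).ne' fun x hx => ?_
  obtain ⟨hx0, hx1⟩ := lt_min_iff.1 hx.2
  have hidx : voronoiIndex m x = 0 :=
    Nat.le_zero.1 (voronoiIndex_le_of_le_apply hm.1.monotone (i := ⟨0, i.pos⟩)
      (hx0.trans (hm.2 _).1).le)
  have hfx : 0 < f (x + t) := hf.pos _ ⟨by linarith [hx.1], by linarith⟩
  have hmx : 0 < m i - x := by linarith [(hm.2 i).1]
  have hfm : 0 < f (m i) := hf.pos _ (hm.2 i)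
  rw [hf.eq_zero x fun h => h.1.not_gt hx0, mul_zero, mul_zero, somDrift, hidx]
  simp only [Nat.dist_zero_right]
  positivity

end Translation

section Reflection

variable {n : ℕ} {Λ : ℕ → ℝ} {μ : Measure ℝ} {m : Fin n → ℝ}

/-- The image of the state `m` under the symmetry `x ↦ 1 - x` of the input space; the units are
renumbered so that the order is preserved. -/
def reflect (m : Fin n → ℝ) : Fin n → ℝ := fun i => 1 - m i.rev

theorem monotone_reflect (hm : Monotone m) : Monotone (reflect m) := fun _ _ hij =>
  sub_le_sub_left (hm (Fin.rev_le_rev.2 hij)) 1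

theorem reflect_mem_Fplus (hm : m ∈ Fplus n) : reflect m ∈ Fplus n :=
  ⟨fun _ _ hij => sub_lt_sub_left (hm.1 (Fin.rev_lt_rev.2 hij)) 1,
    fun i => Ioo.one_sub_mem (hm.2 i.rev)⟩

theorem somBnd_reflect (m : Fin n → ℝ) {j k : ℕ} (hjk : j + k + 2 = n) :
    somBnd (reflect m) (j + 1) = 1 - somBnd m (k + 1) := by
  rw [somBnd_succ _ (show j + 1 < n by omega), somBnd_succ _ (show k + 1 < n by omega)]
  have h₁ : (⟨j, by omega⟩ : Fin n).rev = ⟨k + 1, by omega⟩ := Fin.ext (by simp; omega)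
  have h₂ : (⟨j + 1, by omega⟩ : Fin n).rev = ⟨k, by omega⟩ := Fin.ext (by simp; omega)
  simp only [reflect, h₁, h₂]
  ring

theorem voronoiIndex_reflect_add {x : ℝ} (hx : ∀ j, somBnd m j ≠ x) :
    voronoiIndex (reflect m) (1 - x) + voronoiIndex m x = n - 1 := by
  have hreflect : voronoiIndex (reflect m) (1 - x) =
      ((Finset.range (n - 1)).filter fun j => ¬ somBnd m (j + 1) < x).card := by
    rw [voronoiIndex, Finset.card_filter, Finset.card_filter, ← Finset.sum_range_reflect]
    refine Finset.sum_congr rfl fun j hj => ?_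
    rw [Finset.mem_range] at hj
    simp only [somBnd_reflect m (show n - 1 - 1 - j + j + 2 = n by omega), sub_lt_sub_iff_left,
      not_lt, (hx (j + 1)).symm.le_iff_lt]
  rw [hreflect, add_comm, voronoiIndex, Finset.card_filter_add_card_filter_not, Finset.card_range]

theorem somDrift_reflect {x : ℝ} (hx : ∀ j, somBnd m j ≠ x) (i : Fin n) :
    somDrift Λ (reflect m) (1 - x) i = -somDrift Λ m x i.rev := by
  have hidx := voronoiIndex_reflect_add hx
  have hdist : Nat.dist i (voronoiIndex (reflect m) (1 - x)) =
      Nat.dist i.rev (voronoiIndex m x) := by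
    have := i.2
    simp only [Nat.dist, Fin.val_rev]
    omega
  simp only [somDrift, hdist, reflect]
  ring

theorem meanDrift_reflect (hΛ : ∀ k, Λ k ∈ Icc (0 : ℝ) 1) [IsFiniteMeasure μ]
    [NullSingletonClass μ] (hμ : ∀ᵐ x ∂μ, x ∈ Icc (0 : ℝ) 1) (i : Fin n) :
    meanDrift Λ (μ.map fun x => 1 - x) (reflect m) i = -meanDrift Λ μ m i.rev := by
  have hmeas : Measurable fun x : ℝ => 1 - x := by fun_prop
  have hμ' : ∀ᵐ x ∂μ.map fun x => 1 - x, x ∈ Icc (0 : ℝ) 1 :=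
    (ae_map_iff hmeas.aemeasurable measurableSet_Icc).2 (hμ.mono fun _ hx => Icc.one_sub_mem hx)
  rw [meanDrift_apply hΛ hμ', meanDrift_apply hΛ hμ, ← integral_neg, integral_map
    hmeas.aemeasurable ((continuous_apply i).comp_aestronglyMeasurable
      (aestronglyMeasurable_somDrift _))]
  exact integral_congr_ae ((ae_somBnd_ne μ m).mono fun x hx => somDrift_reflect hx i)

end Reflection

section Contact

variable {n : ℕ} {Λ : ℕ → ℝ} {μ : Measure ℝ} [IsFiniteMeasure μ] {f : ℝ → ℝ}
  {ms m : Fin n → ℝ} {i : Fin n} {t : ℝ}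

theorem meanDrift_apply_nonneg_of_le_add (hΛ : ∀ k, Λ k ∈ Icc (0 : ℝ) 1) (hΛanti : Antitone Λ)
    (hf : HasLogConcaveDensity μ f) (hms : ms ∈ Fplus n) (hzero : meanDrift Λ μ ms = 0)
    (hm : Monotone m) (ht : 0 ≤ t) (hle : ∀ j, m j ≤ ms j + t) (hi : m i = ms i + t) :
    0 ≤ meanDrift Λ μ m i := by
  have hshift := mul_meanDrift_le hΛ hf ms i ht
  rw [hzero, Pi.zero_apply, mul_zero] at hshift
  exact (nonneg_of_mul_nonneg_right hshift (hf.pos _ (hms.2 i))).trans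
    (meanDrift_apply_le hΛ hΛanti hf.ae_mem_Icc hm (hms.1.monotone.add_const t) hle hi)

theorem meanDrift_apply_pos_of_pos (hΛ : ∀ k, Λ k ∈ Icc (0 : ℝ) 1) (hΛanti : Antitone Λ)
    (hf : HasLogConcaveDensity μ f) (hms : ms ∈ Fplus n) (hzero : meanDrift Λ μ ms = 0)
    (hm : Monotone m) (ht : 0 < t) (hle : ∀ j, m j ≤ ms j + t) (hi : m i = ms i + t)
    (hΛi : 0 < Λ i) : 0 < meanDrift Λ μ m i := by
  have hshift := mul_meanDrift_lt hΛ hf hms hΛi ht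
  rw [hzero, Pi.zero_apply, mul_zero] at hshift
  exact (pos_of_mul_pos_right hshift (hf.pos _ (hms.2 i)).le).trans_le
    (meanDrift_apply_le hΛ hΛanti hf.ae_mem_Icc hm (hms.1.monotone.add_const t) hle hi)

theorem meanDrift_apply_pos_of_lt (hΛ : ∀ k, Λ k ∈ Icc (0 : ℝ) 1) (hΛanti : Antitone Λ)
    (hf : HasLogConcaveDensity μ f) (hms : ms ∈ Fplus n) (hzero : meanDrift Λ μ ms = 0)
    (hm : Monotone m) (ht : 0 ≤ t) (hle : ∀ j, m j ≤ ms j + t) (hi : m i = ms i + t)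
    (hi1 : m i ≤ 1) {k : ℕ} (hk : Λ (k + 1) < Λ k) {l : Fin n} (hl : l + (k + 1) = i)
    (hlt : m l < ms l + t) : 0 < meanDrift Λ μ m i :=
  (meanDrift_apply_nonneg_of_le_add hΛ hΛanti hf hms hzero (hms.1.monotone.add_const t) ht
    (fun _ => le_rfl) rfl).trans_lt
    (meanDrift_apply_lt hΛ hΛanti hf.ae_mem_Icc hf.restrict_absolutelyContinuous hm
      (hms.1.add_const t) hle hi hi1 (add_pos_of_pos_of_nonneg (hms.2 l).1 ht) hlt hk hl)

theorem exists_meanDrift_apply_pos (hΛ : ∀ k, Λ k ∈ Icc (0 : ℝ) 1) (hΛanti : Antitone Λ)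
    (hΛ0 : 0 < Λ 0) (hf : HasLogConcaveDensity μ f) (hms : ms ∈ Fplus n)
    (hzero : meanDrift Λ μ ms = 0) (hm : Monotone m) (hm1 : ∀ j, m j ≤ 1) (ht : 0 < t)
    (hle : ∀ j, m j ≤ ms j + t) (hi : m i = ms i + t) :
    ∃ j, m j = ms j + t ∧ 0 < meanDrift Λ μ m j := by
  obtain ⟨j, hj, hjmin⟩ := wellFounded_lt.has_min {j | m j = ms j + t} ⟨i, hi⟩
  refine ⟨j, hj, ?_⟩
  rcases (hΛ j).1.lt_or_eq with hΛj | hΛj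
  · exact meanDrift_apply_pos_of_pos hΛ hΛanti hf hms hzero hm ht hle hj hΛj
  · obtain ⟨k, hkj, hk⟩ := exists_succ_lt_of_lt (hΛj ▸ hΛ0)
    have hl : (j - (k + 1) : ℕ) < n := by omega
    refine meanDrift_apply_pos_of_lt hΛ hΛanti hf hms hzero hm ht.le hle hj (hm1 j) hk
      (l := ⟨j - (k + 1), hl⟩) (Nat.sub_add_cancel hkj) ((hle _).lt_of_ne fun h => ?_)
    exact hjmin _ h (Fin.lt_def.2 (Nat.sub_lt_self k.succ_pos hkj))

theorem reflect_le_add (hle : ∀ j, ms j ≤ m j + t) (j : Fin n) :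
    reflect m j ≤ reflect ms j + t := by
  simp only [reflect]
  linarith [hle j.rev]

theorem reflect_eq_add_iff : reflect m i = reflect ms i + t ↔ ms i.rev = m i.rev + t := by
  simp only [reflect]
  constructor <;> intro h <;> linarith

theorem meanDrift_reflect_eq_zero (hΛ : ∀ k, Λ k ∈ Icc (0 : ℝ) 1) (hf : HasLogConcaveDensity μ f)
    (hzero : meanDrift Λ μ ms = 0) : meanDrift Λ (μ.map fun x => 1 - x) (reflect ms) = 0 := by
  have := hf.nullSingletonClass
  ext i
  rw [meanDrift_reflect hΛ hf.ae_mem_Icc, hzero]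
  simp

theorem meanDrift_apply_nonpos_of_le_add (hΛ : ∀ k, Λ k ∈ Icc (0 : ℝ) 1) (hΛanti : Antitone Λ)
    (hf : HasLogConcaveDensity μ f) (hms : ms ∈ Fplus n) (hzero : meanDrift Λ μ ms = 0)
    (hm : Monotone m) (ht : 0 ≤ t) (hle : ∀ j, ms j ≤ m j + t) (hi : ms i = m i + t) :
    meanDrift Λ μ m i ≤ 0 := by
  have := hf.nullSingletonClass
  have h := meanDrift_apply_nonneg_of_le_add hΛ hΛanti hf.map_one_sub (reflect_mem_Fplus hms)
    (meanDrift_reflect_eq_zero hΛ hf hzero) (monotone_reflect hm) ht (reflect_le_add hle)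
    (reflect_eq_add_iff.2 (i.rev_rev.symm ▸ hi))
  rwa [meanDrift_reflect hΛ hf.ae_mem_Icc, Fin.rev_rev, neg_nonneg] at h

theorem exists_meanDrift_apply_neg (hΛ : ∀ k, Λ k ∈ Icc (0 : ℝ) 1) (hΛanti : Antitone Λ)
    (hΛ0 : 0 < Λ 0) (hf : HasLogConcaveDensity μ f) (hms : ms ∈ Fplus n)
    (hzero : meanDrift Λ μ ms = 0) (hm : Monotone m) (hm0 : ∀ j, 0 ≤ m j) (ht : 0 < t)
    (hle : ∀ j, ms j ≤ m j + t) (hi : ms i = m i + t) :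
    ∃ j, ms j = m j + t ∧ meanDrift Λ μ m j < 0 := by
  have := hf.nullSingletonClass
  obtain ⟨j, hj, hpos⟩ := exists_meanDrift_apply_pos hΛ hΛanti hΛ0 hf.map_one_sub
    (reflect_mem_Fplus hms) (meanDrift_reflect_eq_zero hΛ hf hzero) (monotone_reflect hm)
    (fun j => sub_le_self 1 (hm0 j.rev)) ht (reflect_le_add hle)
    (reflect_eq_add_iff.2 (i.rev_rev.symm ▸ hi))
  rw [meanDrift_reflect hΛ hf.ae_mem_Icc, neg_pos] at hpos
  exact ⟨j.rev, reflect_eq_add_iff.1 hj, hpos⟩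

end Contact

section Deviation

variable {n : ℕ} {Λ : ℕ → ℝ} {μ : Measure ℝ} [IsFiniteMeasure μ] {f : ℝ → ℝ} {ms m : Fin n → ℝ}

/-- The weakly increasing states with values in `[0, 1]`: a compact set containing `F_n^+`. -/
def orderedCube (n : ℕ) : Set (Fin n → ℝ) := Icc 0 1 ∩ {m | Monotone m}

theorem isCompact_orderedCube : IsCompact (orderedCube n) :=
  isCompact_Icc.inter_right isClosed_monotone

theorem Fplus_subset_orderedCube : Fplus n ⊆ orderedCube n := fun _ hm =>
  ⟨⟨fun i => (hm.2 i).1.le, fun i => (hm.2 i).2.le⟩, hm.1.monotone⟩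

/-- The signed coordinates `(v, -v)` of a vector `v`. Their maximum is the sup norm of `v`, so that
smoothing the maximum smooths the norm. -/
def signedCoords (ι : Type*) : (ι → ℝ) →L[ℝ] (ι ⊕ ι → ℝ) :=
  ContinuousLinearMap.pi (Sum.elim (fun i => .proj i) (fun i => -.proj i))

@[simp]
theorem signedCoords_inl {ι : Type*} (v : ι → ℝ) (i : ι) : signedCoords ι v (.inl i) = v i := rfl

@[simp]
theorem signedCoords_inr {ι : Type*} (v : ι → ℝ) (i : ι) : signedCoords ι v (.inr i) = -v i := rfl

theorem signedCoords_nonneg_of_forall_le {ι : Type*} {v : ι → ℝ} {k : ι ⊕ ι}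
    (hk : ∀ j, signedCoords ι v j ≤ signedCoords ι v k) : 0 ≤ signedCoords ι v k := by
  rcases k with i | i
  · simpa using hk (.inr i)
  · simpa using hk (.inl i)

theorem signedCoords_meanDrift_nonneg (hΛ : ∀ k, Λ k ∈ Icc (0 : ℝ) 1) (hΛanti : Antitone Λ)
    (hf : HasLogConcaveDensity μ f) (hms : ms ∈ Fplus n) (hzero : meanDrift Λ μ ms = 0)
    (hm : Monotone m) {k : Fin n ⊕ Fin n}
    (hk : ∀ j, signedCoords _ (m - ms) j ≤ signedCoords _ (m - ms) k) :
    0 ≤ signedCoords _ (meanDrift Λ μ m) k := by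
  have ht := signedCoords_nonneg_of_forall_le hk
  rcases k with i | i
  · exact meanDrift_apply_nonneg_of_le_add hΛ hΛanti hf hms hzero hm ht
      (fun j => sub_le_iff_le_add'.1 (hk (.inl j))) (add_sub_cancel _ _).symm
  · refine neg_nonneg.2 (meanDrift_apply_nonpos_of_le_add hΛ hΛanti hf hms hzero hm ht
      (fun j => ?_) (by simp))
    simpa [add_comm] using hk (.inr j)

theorem eq_of_signedCoords_meanDrift_eq_zero [NeZero n] (hΛ : ∀ k, Λ k ∈ Icc (0 : ℝ) 1)
    (hΛanti : Antitone Λ) (hΛ0 : 0 < Λ 0) (hf : HasLogConcaveDensity μ f) (hms : ms ∈ Fplus n)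
    (hzero : meanDrift Λ μ ms = 0) (hm : m ∈ orderedCube n)
    (h : ∀ k, (∀ j, signedCoords _ (m - ms) j ≤ signedCoords _ (m - ms) k) →
      signedCoords _ (meanDrift Λ μ m) k = 0) : m = ms := by
  obtain ⟨k, hk⟩ := Finite.exists_max (signedCoords _ (m - ms))
  rcases (signedCoords_nonneg_of_forall_le hk).eq_or_lt with ht | ht
  · rw [← ht] at hk
    ext i
    have hl := hk (.inl i)
    have hr := hk (.inr i)
    simp only [signedCoords_inl, signedCoords_inr, Pi.sub_apply] at hl hr
    linarith
  rcases k with i | i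
  · obtain ⟨j, hj, hpos⟩ := exists_meanDrift_apply_pos hΛ hΛanti hΛ0 hf hms hzero hm.2 hm.1.2 ht
      (fun j => sub_le_iff_le_add'.1 (hk (.inl j))) (add_sub_cancel (ms i) (m i)).symm
    have hj' : signedCoords _ (m - ms) (.inl j) = signedCoords _ (m - ms) (.inl i) := by
      simpa using sub_eq_of_eq_add' hj
    exact absurd (h (.inl j) fun l => (hk l).trans_eq hj'.symm) hpos.ne'
  · obtain ⟨j, hj, hneg⟩ := exists_meanDrift_apply_neg hΛ hΛanti hΛ0 hf hms hzero hm.2 hm.1.1 ht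
      (fun j => by simpa [add_comm] using hk (.inr j)) (by simp : ms i = _)
    have hj' : signedCoords _ (m - ms) (.inr j) = signedCoords _ (m - ms) (.inr i) := by
      simpa [sub_eq_iff_eq_add'] using hj
    exact absurd (h (.inr j) fun l => (hk l).trans_eq hj'.symm) (neg_pos.2 hneg).ne'

end Deviation

section Stationarity

variable {E X : Type*} [NormedAddCommGroup E] [NormedSpace ℝ E]

theorem exists_forall_norm_sub_sub_fderiv_le {F : Type*} [NormedAddCommGroup F] [NormedSpace ℝ F]
    {φ : E → F} (hφ : ContDiff ℝ 1 φ) {K : Set E} (hK : IsCompact K) {η : ℝ} (hη : 0 < η) :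
    ∃ δ > 0, ∀ m ∈ K, ∀ v, ‖v‖ < δ → ‖φ (m + v) - φ m - fderiv ℝ φ m v‖ ≤ η * ‖v‖ := by
  have hunif := hK.uniformContinuousAt_of_continuousAt (fderiv ℝ φ)
    (fun m _ => (hφ.continuous_fderiv one_ne_zero).continuousAt) (Metric.dist_mem_uniformity hη)
  obtain ⟨δ, hδ, hsub⟩ := Metric.mem_uniformity_dist.1 hunif
  refine ⟨δ, hδ, fun m hm v hv => ?_⟩
  have hfderiv : ∀ y ∈ Metric.ball m δ, ‖fderiv ℝ φ y - fderiv ℝ φ m‖ ≤ η := fun y hy => by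
    rw [← dist_eq_norm, dist_comm]
    exact (hsub (Metric.mem_ball'.1 hy) hm).le
  simpa using (convex_ball m δ).norm_image_sub_le_of_norm_fderiv_le'
    (fun y _ => hφ.differentiable one_ne_zero y) hfderiv (Metric.mem_ball_self hδ)
    (by simpa using hv : m + v ∈ Metric.ball m δ)

variable [MeasurableSpace E] [BorelSpace E] [SecondCountableTopology E] [MeasurableSpace X]
  {μ : Measure X} {ν : Measure E} {b : E × X → E} {φ : E → ℝ} {K : Set E} {C ε η : ℝ}

theorem integrable_fderiv_apply [IsFiniteMeasure μ] [IsFiniteMeasure ν] (hφ : ContDiff ℝ 1 φ)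
    (hb : Measurable b) (hbC : ∀ᵐ p ∂ν.prod μ, ‖b p‖ ≤ C) (hK : IsCompact K)
    (hν : ∀ᵐ m ∂ν, m ∈ K) : Integrable (fun p => fderiv ℝ φ p.1 (b p)) (ν.prod μ) := by
  have hcont := hφ.continuous_fderiv one_ne_zero
  obtain ⟨B, hB⟩ := hK.exists_bound_of_continuousOn hcont.continuousOn
  refine (integrable_const (B * C)).mono'
    ((hφ.continuous_fderiv_apply one_ne_zero).comp_aestronglyMeasurable
      (measurable_fst.prodMk hb).aestronglyMeasurable) ?_
  filter_upwards [hbC, Measure.quasiMeasurePreserving_fst.ae hν] with p hp hpK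
  exact (ContinuousLinearMap.le_opNorm _ _).trans
    (mul_le_mul (hB _ hpK) hp (norm_nonneg _) ((norm_nonneg _).trans (hB _ hpK)))

theorem integral_fderiv_apply_prod [CompleteSpace E] [IsFiniteMeasure μ] [IsFiniteMeasure ν]
    (hφ : ContDiff ℝ 1 φ) (hb : Measurable b) (hbC : ∀ᵐ p ∂ν.prod μ, ‖b p‖ ≤ C)
    (hK : IsCompact K) (hν : ∀ᵐ m ∂ν, m ∈ K) :
    ∫ p, fderiv ℝ φ p.1 (b p) ∂ν.prod μ = ∫ m, fderiv ℝ φ m (∫ x, b (m, x) ∂μ) ∂ν := by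
  rw [integral_prod _ (integrable_fderiv_apply hφ hb hbC hK hν)]
  refine integral_congr_ae ?_
  filter_upwards [Measure.ae_ae_of_ae_prod hbC] with m hm
  exact (fderiv ℝ φ m).integral_comp_comm ((integrable_const C).mono'
    (hb.comp measurable_prodMk_left).aestronglyMeasurable hm)

theorem abs_integral_fderiv_le [IsProbabilityMeasure μ] [IsProbabilityMeasure ν]
    (hinv : (ν.prod μ).map (fun p => p.1 - ε • b p) = ν) (hφ : ContDiff ℝ 1 φ) (hb : Measurable b)
    (hbC : ∀ᵐ p ∂ν.prod μ, ‖b p‖ ≤ C) (hK : IsCompact K) (hν : ∀ᵐ m ∂ν, m ∈ K) (hε : 0 < ε)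
    (hTaylor : ∀ m ∈ K, ∀ v, ‖v‖ ≤ ε * C → ‖φ (m + v) - φ m - fderiv ℝ φ m v‖ ≤ η * ‖v‖)
    (hη : 0 ≤ η) :
    |∫ p, fderiv ℝ φ p.1 (b p) ∂ν.prod μ| ≤ η * C := by
  have hT : Measurable fun p : E × X => p.1 - ε • b p := measurable_fst.sub (hb.const_smul ε)
  have hint := integrable_of_continuous_of_ae_mem_isCompact hφ.continuous hK hν
  have hint_shift : Integrable (fun p => φ (p.1 - ε • b p)) (ν.prod μ) :=
    (integrable_map_measure hφ.continuous.aestronglyMeasurable hT.aemeasurable).1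
      (hinv.symm ▸ hint)
  have hint_diff : Integrable (fun p => φ (p.1 - ε • b p) - φ p.1) (ν.prod μ) :=
    hint_shift.sub (hint.comp_fst μ)
  have hint_fderiv := integrable_fderiv_apply hφ hb hbC hK hν
  have hstat : ∫ p, φ (p.1 - ε • b p) ∂ν.prod μ = ∫ p, φ p.1 ∂ν.prod μ := by
    rw [← integral_map hT.aemeasurable hφ.continuous.aestronglyMeasurable, hinv, integral_fun_fst,
      probReal_univ, one_smul]
  have hrem : ∀ᵐ p ∂ν.prod μ,
      ‖φ (p.1 - ε • b p) - φ p.1 + ε * fderiv ℝ φ p.1 (b p)‖ ≤ ε * (η * C) := by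
    filter_upwards [hbC, Measure.quasiMeasurePreserving_fst.ae hν] with p hp hpK
    have hnorm : ‖-(ε • b p)‖ ≤ ε * C := by
      rw [norm_neg, norm_smul, Real.norm_of_nonneg hε.le]
      gcongr
    have h := (hTaylor p.1 hpK _ hnorm).trans (mul_le_mul_of_nonneg_left hnorm hη)
    rw [map_neg, map_smul, sub_neg_eq_add, ← sub_eq_add_neg] at h
    rwa [smul_eq_mul, mul_left_comm] at h
  have hle := norm_integral_le_of_norm_le_const hrem
  rw [integral_add hint_diff (hint_fderiv.const_mul ε),
    integral_sub hint_shift (hint.comp_fst μ), hstat, sub_self, zero_add, integral_const_mul,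
    probReal_univ, mul_one, norm_mul, Real.norm_of_nonneg hε.le] at hle
  exact le_of_mul_le_mul_left hle hε

theorem tendsto_integral_fderiv [CompleteSpace E] [IsProbabilityMeasure μ] {ν : ℝ → Measure E}
    (hν : ∀ᶠ ε in 𝓝[>] 0, IsProbabilityMeasure (ν ε) ∧ (∀ᵐ m ∂ν ε, m ∈ K) ∧
      ((ν ε).prod μ).map (fun p => p.1 - ε • b p) = ν ε)
    (hK : IsCompact K) (hb : Measurable b) (hbC : ∀ m ∈ K, ∀ᵐ x ∂μ, ‖b (m, x)‖ ≤ C)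
    (hφ : ContDiff ℝ 1 φ) :
    Tendsto (fun ε => ∫ m, fderiv ℝ φ m (∫ x, b (m, x) ∂μ) ∂ν ε) (𝓝[>] 0) (𝓝 0) := by
  refine Metric.tendsto_nhds.2 fun r hr => ?_
  obtain ⟨η, hη, hηr⟩ : ∃ η > 0, η * C < r :=
    ⟨r / (|C| + 1), by positivity, by
      rw [div_mul_eq_mul_div, div_lt_iff₀ (by positivity)]
      nlinarith [le_abs_self C]⟩
  obtain ⟨δ, hδ, hTaylor⟩ := exists_forall_norm_sub_sub_fderiv_le hφ hK hη
  have hεC : ∀ᶠ ε in 𝓝[>] (0 : ℝ), ε * C < δ :=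
    ((continuous_mul_const C).tendsto' 0 0 (zero_mul C)).eventually_lt_const hδ
      |>.filter_mono nhdsWithin_le_nhds
  filter_upwards [hν, self_mem_nhdsWithin, hεC] with ε ⟨hprob, hmem, hinv⟩ hε hεδ
  have hbprod : ∀ᵐ p ∂(ν ε).prod μ, ‖b p‖ ≤ C :=
    (Measure.ae_prod_iff_ae_ae (measurableSet_le hb.norm measurable_const)).2 (hmem.mono hbC)
  rw [dist_zero_right, ← integral_fderiv_apply_prod hφ hb hbprod hK hmem]
  exact (abs_integral_fderiv_le hinv hφ hb hbprod hK hmem hε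
    (fun m hm v hv => hTaylor m hm v (hv.trans_lt hεδ)) hη.le).trans_lt hηr

end Stationarity

section Softmax

variable {ι : Type*} [Fintype ι]

/-- The smooth approximation `log ∑ exp aᵢ` of the maximum of the coordinates of `a`. -/
def logSumExp (a : ι → ℝ) : ℝ := Real.log (∑ i, Real.exp (a i))

/-- The gradient of `logSumExp`: the probability vector proportional to `exp aᵢ`. -/
def softmax (a : ι → ℝ) (i : ι) : ℝ := Real.exp (a i) / ∑ j, Real.exp (a j)

/-- The indices at which the vector `a` attains its maximum. -/
def maximizers (a : ι → ℝ) : Finset ι := {i | ∀ j, a j ≤ a i}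

theorem mem_maximizers {a : ι → ℝ} {i : ι} : i ∈ maximizers a ↔ ∀ j, a j ≤ a i := by
  simp [maximizers]

theorem nonempty_maximizers [Nonempty ι] (a : ι → ℝ) : (maximizers a).Nonempty :=
  (Finite.exists_max a).imp fun _ => mem_maximizers.2

theorem sum_exp_pos [Nonempty ι] (a : ι → ℝ) : 0 < ∑ i, Real.exp (a i) :=
  Finset.sum_pos (fun i _ => Real.exp_pos (a i)) Finset.univ_nonempty

theorem contDiff_logSumExp [Nonempty ι] : ContDiff ℝ 1 (logSumExp : (ι → ℝ) → ℝ) :=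
  ContDiff.log (by fun_prop) fun a => (sum_exp_pos a).ne'

theorem hasFDerivAt_logSumExp [Nonempty ι] (a : ι → ℝ) :
    HasFDerivAt logSumExp (∑ i, softmax a i • (.proj i : (ι → ℝ) →L[ℝ] ℝ)) a := by
  have hsum : HasFDerivAt (fun a : ι → ℝ => ∑ i, Real.exp (a i))
      (∑ i, Real.exp (a i) • (.proj i : (ι → ℝ) →L[ℝ] ℝ)) a :=
    HasFDerivAt.fun_sum fun i _ => (hasFDerivAt_apply i a).exp
  refine (hsum.log (sum_exp_pos a).ne').congr_fderiv ?_
  simp only [Finset.smul_sum, smul_smul, softmax, div_eq_inv_mul]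

theorem fderiv_logSumExp_smul_comp [Nonempty ι] {E : Type*} [NormedAddCommGroup E]
    [NormedSpace ℝ E] (L : E →L[ℝ] ι → ℝ) (m₀ m v : E) (β : ℝ) :
    fderiv ℝ (fun m => logSumExp (β • L (m - m₀))) m v =
      β * ∑ i, softmax (β • L (m - m₀)) i * L v i := by
  have hL : HasFDerivAt (fun m => β • L (m - m₀)) (β • L) m :=
    (L.hasFDerivAt.comp m ((hasFDerivAt_id m).sub_const m₀)).const_smul β
  change fderiv ℝ (logSumExp ∘ fun m => β • L (m - m₀)) m v = _
  rw [((hasFDerivAt_logSumExp _).comp m hL).fderiv]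
  simp [Finset.mul_sum]

theorem softmax_nonneg (a : ι → ℝ) (i : ι) : 0 ≤ softmax a i := by
  unfold softmax
  positivity

theorem softmax_le_one (a : ι → ℝ) (i : ι) : softmax a i ≤ 1 :=
  div_le_one_of_le₀ (Finset.single_le_sum (f := fun j => Real.exp (a j))
    (fun _ _ => (Real.exp_pos _).le) (Finset.mem_univ i)) (by positivity)

theorem measurable_softmax (i : ι) : Measurable fun a : ι → ℝ => softmax a i := by
  unfold softmax
  fun_prop

theorem softmax_add_const (a : ι → ℝ) (c : ℝ) (i : ι) :
    softmax (fun j => a j + c) i = softmax a i := by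
  simp only [softmax, Real.exp_add, ← Finset.sum_mul]
  exact mul_div_mul_right _ _ (Real.exp_pos c).ne'

theorem tendsto_exp_mul_sub_atTop {a : ι → ℝ} {i j : ι} (hi : i ∈ maximizers a) :
    Tendsto (fun β => Real.exp (β * (a j - a i))) atTop
      (𝓝 (if j ∈ maximizers a then 1 else 0)) := by
  rw [mem_maximizers] at hi
  split_ifs with hj
  · simp [(hi j).antisymm (mem_maximizers.1 hj i)]
  · have hlt : a j < a i := (hi j).lt_of_ne fun h => hj (mem_maximizers.2 (h ▸ hi))
    exact Real.tendsto_exp_atBot.comp (tendsto_id.atTop_mul_const_of_neg (sub_neg.2 hlt))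

theorem tendsto_softmax_smul_atTop [Nonempty ι] (a : ι → ℝ) (j : ι) :
    Tendsto (fun β : ℝ => softmax (β • a) j) atTop
      (𝓝 (if j ∈ maximizers a then ((maximizers a).card : ℝ)⁻¹ else 0)) := by
  obtain ⟨i, hi⟩ := nonempty_maximizers a
  have hsoft (β : ℝ) : softmax (β • a) j =
      Real.exp (β * (a j - a i)) / ∑ k, Real.exp (β * (a k - a i)) := by
    rw [← softmax_add_const _ (-(β * a i))]
    simp only [softmax, Pi.smul_apply, smul_eq_mul, mul_sub, ← sub_eq_add_neg]
  have hsum : Tendsto (fun β => ∑ k, Real.exp (β * (a k - a i))) atTop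
      (𝓝 ((maximizers a).card : ℝ)) := by
    simpa using tendsto_finsetSum Finset.univ fun k _ => tendsto_exp_mul_sub_atTop (j := k) hi
  simp only [hsoft]
  have hdiv := (tendsto_exp_mul_sub_atTop (j := j) hi).div hsum
    (Nat.cast_ne_zero.2 (Finset.card_ne_zero_of_mem hi))
  rwa [ite_div, one_div, zero_div] at hdiv

theorem tendsto_sum_softmax_smul_mul_atTop [Nonempty ι] (a c : ι → ℝ) :
    Tendsto (fun β : ℝ => ∑ i, softmax (β • a) i * c i) atTop
      (𝓝 (((maximizers a).card : ℝ)⁻¹ * ∑ i ∈ maximizers a, c i)) := by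
  convert tendsto_finsetSum Finset.univ fun i _ =>
    (tendsto_softmax_smul_atTop a i).mul_const (c i) using 2
  simp [Finset.mul_sum, Finset.sum_ite_mem, ite_mul]

theorem ae_eq_zero_of_integral_softmax_nonpos [Nonempty ι] {X : Type*} [MeasurableSpace X]
    {ν : Measure X} {u G : X → ι → ℝ} (hu : Measurable u) (hG : ∀ i, Integrable (fun x => G x i) ν)
    (hpos : ∀ᵐ x ∂ν, ∀ i ∈ maximizers (u x), 0 ≤ G x i)
    (hint : ∀ᶠ β : ℝ in atTop, ∫ x, ∑ i, softmax (β • u x) i * G x i ∂ν ≤ 0) :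
    ∀ᵐ x ∂ν, ∀ i ∈ maximizers (u x), G x i = 0 := by
  set ψ : X → ℝ := fun x => ((maximizers (u x)).card : ℝ)⁻¹ * ∑ i ∈ maximizers (u x), G x i
  have hmeas (β : ℝ) : AEStronglyMeasurable (fun x => ∑ i, softmax (β • u x) i * G x i) ν :=
    Finset.aestronglyMeasurable_fun_sum _ fun i _ =>
      ((measurable_softmax i).comp (hu.const_smul β)).aestronglyMeasurable.mul
        (hG i).aestronglyMeasurable
  have hbound (β : ℝ) (x : X) : ‖∑ i, softmax (β • u x) i * G x i‖ ≤ ∑ i, ‖G x i‖ :=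
    norm_sum_le_of_le _ fun i _ => by
      rw [norm_mul, Real.norm_of_nonneg (softmax_nonneg _ i)]
      exact mul_le_of_le_one_left (norm_nonneg _) (softmax_le_one _ i)
  have hlim (x : X) : Tendsto (fun β : ℝ => ∑ i, softmax (β • u x) i * G x i) atTop (𝓝 (ψ x)) :=
    tendsto_sum_softmax_smul_mul_atTop (u x) (G x)
  have hdom : Integrable (fun x => ∑ i, ‖G x i‖) ν := integrable_finsetSum _ fun i _ => (hG i).norm
  have hψint : Integrable ψ ν :=
    hdom.mono' (aestronglyMeasurable_of_tendsto_ae atTop hmeas (ae_of_all _ hlim))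
      (ae_of_all _ fun x => le_of_tendsto (hlim x).norm (Eventually.of_forall (hbound · x)))
  have hψle : ∫ x, ψ x ∂ν ≤ 0 :=
    le_of_tendsto (tendsto_integral_filter_of_dominated_convergence _ (.of_forall hmeas)
      (.of_forall fun β => ae_of_all _ (hbound β)) hdom (ae_of_all _ hlim)) hint
  have hψ0 : 0 ≤ᵐ[ν] ψ := hpos.mono fun x hx =>
    mul_nonneg (by positivity) (Finset.sum_nonneg hx)
  have hψeq := (integral_eq_zero_iff_of_nonneg_ae hψ0 hψint).1
    (hψle.antisymm (integral_nonneg_of_ae hψ0))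
  filter_upwards [hpos, hψeq] with x hx hψx
  refine (Finset.sum_eq_zero_iff_of_nonneg hx).1 ((mul_eq_zero.1 hψx).resolve_left ?_)
  simpa using (nonempty_maximizers (u x)).ne_empty

end Softmax

section WeakLimit

variable {ι X : Type*} {l : Filter ι} [MeasurableSpace X]

theorem tendsto_of_unique_integral_limit [TopologicalSpace X] [CompactSpace X] [T2Space X]
    [BorelSpace X] [HasOuterApproxClosed X]
    {P : ι → ProbabilityMeasure X} {Q₀ : ProbabilityMeasure X}
    (huniq : ∀ Q : ProbabilityMeasure X,
      (∀ (ψ : BoundedContinuousFunction X ℝ) (c : ℝ),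
        Tendsto (fun a => ∫ x, ψ x ∂(P a)) l (𝓝 c) → ∫ x, ψ x ∂Q = c) → Q = Q₀) :
    Tendsto P l (𝓝 Q₀) := by
  refine tendsto_nhds_of_unique_mapClusterPt fun Q hQ => huniq Q fun ψ c hc => ?_
  have hcluster : MapClusterPt (∫ x, ψ x ∂Q) l fun a => ∫ x, ψ x ∂(P a) :=
    hQ.continuousAt_comp
      (ProbabilityMeasure.continuous_integral_boundedContinuousFunction ψ).continuousAt
  exact eq_of_nhds_neBot (hcluster.neBot.mono (inf_le_inf_left _ hc))

theorem exists_probabilityMeasure_map_eq {K : Set X} (hK : MeasurableSet K) {ν : Measure X}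
    [IsProbabilityMeasure ν] (hν : ∀ᵐ x ∂ν, x ∈ K) :
    ∃ P : ProbabilityMeasure K, (P : Measure K).map (↑) = ν := by
  have hprob : IsProbabilityMeasure (ν.comap ((↑) : K → X)) :=
    (MeasurableEmbedding.subtype_coe hK).isProbabilityMeasure_comap (by simpa using hν)
  exact ⟨⟨_, hprob⟩, (map_comap_subtype_coe hK ν).trans (Measure.restrict_eq_self_of_ae_mem hν)⟩

theorem integral_map_subtype_coe [TopologicalSpace X] [BorelSpace X]
    {K : Set X} (P : Measure K) {ψ : X → ℝ} (hψ : Continuous ψ) :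
    ∫ x, ψ x ∂P.map (↑) = ∫ x : K, ψ x ∂P :=
  integral_map measurable_subtype_coe.aemeasurable
    hψ.measurable.stronglyMeasurable.aestronglyMeasurable

theorem tendsto_integral_of_unique_limit [MetricSpace X] [BorelSpace X] [l.NeBot]
    {ν : ι → Measure X} {K : Set X} (hK : IsCompact K)
    (hν : ∀ᶠ a in l, IsProbabilityMeasure (ν a) ∧ ∀ᵐ x ∂ν a, x ∈ K)
    {Q₀ : Measure X} [IsProbabilityMeasure Q₀] (hQ₀ : ∀ᵐ x ∂Q₀, x ∈ K)
    (huniq : ∀ (Q : Measure X) [IsProbabilityMeasure Q], (∀ᵐ x ∂Q, x ∈ K) →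
      (∀ ψ : X → ℝ, Continuous ψ → ∀ c : ℝ,
        Tendsto (fun a => ∫ x, ψ x ∂ν a) l (𝓝 c) → ∫ x, ψ x ∂Q = c) → Q = Q₀)
    (g : BoundedContinuousFunction X ℝ) :
    Tendsto (fun a => ∫ x, g x ∂ν a) l (𝓝 (∫ x, g x ∂Q₀)) := by
  have : CompactSpace K := isCompact_iff_compactSpace.1 hK
  have hval {P : Measure K} : AEMeasurable ((↑) : K → X) P := measurable_subtype_coe.aemeasurable
  obtain ⟨P, hP⟩ := (hν.mono fun a ha =>
    have := ha.1
    exists_probabilityMeasure_map_eq hK.measurableSet ha.2).choice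
  obtain ⟨P₀, rfl⟩ := exists_probabilityMeasure_map_eq hK.measurableSet hQ₀
  have hlim : Tendsto P l (𝓝 P₀) := by
    refine tendsto_of_unique_integral_limit fun Q hQ => Subtype.ext ?_
    refine (MeasurableEmbedding.subtype_coe hK.measurableSet).map_injective ?_
    have : IsProbabilityMeasure ((Q : Measure K).map ((↑) : K → X)) :=
      Measure.isProbabilityMeasure_map hval
    refine huniq ((Q : Measure K).map (↑)) ?_ fun ψ hψ c hc => ?_
    · exact (ae_map_iff hval hK.measurableSet).2 (ae_of_all _ fun x => x.2)
    · rw [integral_map_subtype_coe _ hψ]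
      refine hQ (.mkOfCompact ⟨_, hψ.comp continuous_subtype_val⟩) c
        (hc.congr' (hP.mono fun a ha => ?_))
      rw [← ha, integral_map_subtype_coe _ hψ]
      rfl
  rw [integral_map_subtype_coe _ g.continuous]
  refine (ProbabilityMeasure.tendsto_iff_forall_integral_tendsto.1 hlim
    (g.compContinuous ⟨_, continuous_subtype_val⟩)).congr' (hP.mono fun a ha => ?_)
  exact (integral_map_subtype_coe _ g.continuous).symm.trans (by rw [ha])

theorem eq_dirac_of_ae_eq {Q : Measure X} [IsProbabilityMeasure Q] {x₀ : X}
    (h : ∀ᵐ x ∂Q, x = x₀) : Q = Measure.dirac x₀ :=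
  calc Q = Q.map id := Measure.map_id.symm
    _ = Q.map fun _ => x₀ := Measure.map_congr h
    _ = Measure.dirac x₀ := by rw [Measure.map_const, measure_univ, one_smul]

end WeakLimit

section Concentration

variable {n : ℕ} {Λ : ℕ → ℝ} {μ : Measure ℝ} {f : ℝ → ℝ} {ms : Fin n → ℝ}

theorem measurableSet_Fplus : MeasurableSet (Fplus n) := by
  have heq : Fplus n = (⋂ i, ⋂ j, ⋂ _ : i < j, {m : Fin n → ℝ | m i < m j}) ∩
      univ.pi fun _ => Ioo 0 1 := by
    ext m
    simp [Fplus, StrictMono]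
  rw [heq]
  refine .inter (.iInter fun i => .iInter fun j => .iInter fun _ => ?_)
    (.univ_pi fun _ => measurableSet_Ioo)
  exact measurableSet_lt (measurable_pi_apply i) (measurable_pi_apply j)

theorem IsSOMInvariant.map_prod_eq [NeZero n] [SFinite μ] {ε : ℝ} {ν : Measure (Fin n → ℝ)}
    [SFinite ν] (hν : IsSOMInvariant μ Λ ε ν) (hmono : ∀ᵐ m ∂ν, StrictMono m) :
    (ν.prod μ).map (fun p => p.1 - ε • somDrift Λ p.1 p.2) = ν := by
  have hT : Measurable fun p : (Fin n → ℝ) × ℝ => p.1 - ε • somDrift Λ p.1 p.2 :=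
    measurable_fst.sub (measurable_somDrift.const_smul ε)
  have hbind : ν.bind (fun m => (μ.map (Prod.mk m)).map
      fun p => p.1 - ε • somDrift Λ p.1 p.2) = ν := by
    refine (Measure.bind_congr_right ?_).trans hν
    filter_upwards [hmono] with m hm
    simp_rw [Measure.map_map hT measurable_prodMk_left, somUpdate_eq_sub_smul_somDrift hm]
    rfl
  have hmeas : Measurable fun m : Fin n → ℝ => (μ.map (Prod.mk m)).map
      fun p => p.1 - ε • somDrift Λ p.1 p.2 :=
    (Measure.measurable_map _ hT).comp Measurable.map_prodMk_left
  conv_rhs => rw [← hbind]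
  ext s hs
  rw [Measure.map_apply hT hs, Measure.prod_apply (hT hs), Measure.bind_apply hs hmeas.aemeasurable]
  refine lintegral_congr fun m => ?_
  rw [Measure.map_apply hT hs, Measure.map_apply measurable_prodMk_left (hT hs)]

theorem ae_eq_of_integral_fderiv_logSumExp_eq_zero [NeZero n] [IsFiniteMeasure μ]
    (hΛ : ∀ k, Λ k ∈ Icc (0 : ℝ) 1) (hΛanti : Antitone Λ) (hΛ0 : 0 < Λ 0)
    (hf : HasLogConcaveDensity μ f) (hms : ms ∈ Fplus n) (hzero : meanDrift Λ μ ms = 0)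
    {Q : Measure (Fin n → ℝ)} [IsFiniteMeasure Q] (hQ : ∀ᵐ m ∂Q, m ∈ orderedCube n)
    (hint : ∀ β : ℝ, ∫ m, fderiv ℝ (fun m => logSumExp (β • signedCoords (Fin n) (m - ms))) m
      (meanDrift Λ μ m) ∂Q = 0) :
    ∀ᵐ m ∂Q, m = ms := by
  have := hf.nullSingletonClass
  have hcont : Continuous (meanDrift Λ μ : (Fin n → ℝ) → Fin n → ℝ) :=
    continuous_meanDrift hΛ hf.ae_mem_Icc
  have hmax : ∀ᵐ m ∂Q, ∀ k ∈ maximizers (signedCoords (Fin n) (m - ms)),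
      signedCoords (Fin n) (meanDrift Λ μ m) k = 0 := by
    refine ae_eq_zero_of_integral_softmax_nonpos
      ((signedCoords _).continuous.comp (continuous_id.sub continuous_const)).measurable
      (fun k => integrable_of_continuous_of_ae_mem_isCompact (by fun_prop) isCompact_orderedCube hQ)
      ?_ ?_
    · filter_upwards [hQ] with m hm k hk
      exact signedCoords_meanDrift_nonneg hΛ hΛanti hf hms hzero hm.2 (mem_maximizers.1 hk)
    · filter_upwards [eventually_gt_atTop 0] with β hβ
      have h := hint β
      simp_rw [fderiv_logSumExp_smul_comp, integral_const_mul] at h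
      exact ((mul_eq_zero.1 h).resolve_left hβ.ne').le
  filter_upwards [hQ, hmax] with m hm h
  exact eq_of_signedCoords_meanDrift_eq_zero hΛ hΛanti hΛ0 hf hms hzero hm
    fun k hk => h k (mem_maximizers.2 hk)

theorem tendsto_integral_fderiv_meanDrift [NeZero n] [IsProbabilityMeasure μ]
    (hΛ : ∀ k, Λ k ∈ Icc (0 : ℝ) 1) (hμ : ∀ᵐ x ∂μ, x ∈ Icc (0 : ℝ) 1)
    {ν : ℝ → Measure (Fin n → ℝ)}
    (hν : ∀ᶠ ε in 𝓝[>] 0, IsProbabilityMeasure (ν ε) ∧ IsSOMInvariant μ Λ ε (ν ε) ∧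
      ∀ᵐ m ∂ν ε, m ∈ Fplus n)
    {φ : (Fin n → ℝ) → ℝ} (hφ : ContDiff ℝ 1 φ) :
    Tendsto (fun ε => ∫ m, fderiv ℝ φ m (meanDrift Λ μ m) ∂ν ε) (𝓝[>] 0) (𝓝 0) := by
  refine tendsto_integral_fderiv (K := orderedCube n) (C := 2)
    (b := fun p : (Fin n → ℝ) × ℝ => somDrift Λ p.1 p.2) ?_ isCompact_orderedCube
    measurable_somDrift (fun m hm => ?_) hφ
  · filter_upwards [hν] with ε ⟨hprob, hinv, hF⟩
    exact ⟨hprob, hF.mono fun m hm => Fplus_subset_orderedCube hm,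
      hinv.map_prod_eq (hF.mono fun m hm => hm.1)⟩
  · have hnorm : ‖m‖ ≤ 1 := (pi_norm_le_iff_of_nonneg zero_le_one).2 fun i => by
      simpa [abs_of_nonneg (hm.1.1 i)] using hm.1.2 i
    filter_upwards [hμ] with x hx
    linarith [norm_somDrift_le hΛ m hx]

theorem tendsto_integral_of_meanDrift_eq_zero [NeZero n] [IsProbabilityMeasure μ]
    (hΛ : ∀ k, Λ k ∈ Icc (0 : ℝ) 1) (hΛanti : Antitone Λ) (hΛ0 : 0 < Λ 0)
    (hf : HasLogConcaveDensity μ f) (hms : ms ∈ Fplus n) (hzero : meanDrift Λ μ ms = 0)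
    {ν : ℝ → Measure (Fin n → ℝ)}
    (hν : ∀ᶠ ε in 𝓝[>] 0, IsProbabilityMeasure (ν ε) ∧ IsSOMInvariant μ Λ ε (ν ε) ∧
      ∀ᵐ m ∂ν ε, m ∈ Fplus n)
    (g : BoundedContinuousFunction (Fin n → ℝ) ℝ) :
    Tendsto (fun ε => ∫ m, g m ∂ν ε) (𝓝[>] 0) (𝓝 (g ms)) := by
  have := hf.nullSingletonClass
  rw [← integral_dirac g ms]
  refine tendsto_integral_of_unique_limit isCompact_orderedCube
    (hν.mono fun ε h => ⟨h.1, h.2.2.mono fun _ hm => Fplus_subset_orderedCube hm⟩)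
    (by simpa [ae_dirac_eq] using Fplus_subset_orderedCube hms) (fun Q _ hQ hlim => ?_) g
  refine eq_dirac_of_ae_eq (ae_eq_of_integral_fderiv_logSumExp_eq_zero hΛ hΛanti hΛ0 hf hms hzero hQ
    fun β => ?_)
  have hφ : ContDiff ℝ 1 fun m => logSumExp (β • signedCoords (Fin n) (m - ms)) :=
    contDiff_logSumExp.comp (by fun_prop)
  have hcont := (hφ.continuous_fderiv one_ne_zero).clm_apply
    (continuous_meanDrift hΛ hf.ae_mem_Icc)
  exact hlim _ hcont 0 (tendsto_integral_fderiv_meanDrift hΛ hf.ae_mem_Icc hν hφ)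

theorem som_invariant_measures_tendsto_dirac_general [NeZero n]
    (hΛanti : Antitone Λ) (hΛ0 : 0 < Λ 0) (hΛrange : ∀ k, Λ k ∈ Icc (0 : ℝ) 1)
    [IsProbabilityMeasure μ] (hdens : μ = volume.withDensity fun x => ENNReal.ofReal (f x))
    (hsupp : ∀ x ∉ Icc (0 : ℝ) 1, f x = 0) (hpos : ∀ x ∈ Ioo (0 : ℝ) 1, 0 < f x)
    (hlog : ConcaveOn ℝ (Ioo (0 : ℝ) 1) fun x => Real.log (f x))
    (hms : ms ∈ Fplus n) (hzero : meanField Λ f ms = 0) {ν : ℝ → Measure (Fin n → ℝ)}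
    (hν : ∀ᶠ ε in 𝓝[>] 0, IsProbabilityMeasure (ν ε) ∧ IsSOMInvariant μ Λ ε (ν ε) ∧
      ν ε (Fplus n) = 1)
    (g : BoundedContinuousFunction (Fin n → ℝ) ℝ) :
    Tendsto (fun ε => ∫ m, g m ∂ν ε) (𝓝[>] 0) (𝓝 (g ms)) := by
  have hf := hasLogConcaveDensity_indicator hdens hsupp hpos hlog
  have := hf.nullSingletonClass
  have hfae := indicator_Ioo_ae_eq hsupp
  rw [meanField_eq_meanDrift hΛrange hf.ae_mem_Icc (hf.measurable.aemeasurable.congr hfae)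
    (hfae.mono fun x hx => hx ▸ hf.nonneg x) hdens hms.1.monotone] at hzero
  refine tendsto_integral_of_meanDrift_eq_zero hΛrange hΛanti hΛ0 hf hms hzero ?_ g
  filter_upwards [hν] with ε ⟨hprob, hinv, hF⟩
  exact ⟨hprob, hinv, (mem_ae_iff_prob_eq_one measurableSet_Fplus).2 hF⟩

end Concentration

/-- Under `H_Λ` and `H_μ`, invariant probability measures
`ν^ε` carried by `F_n^+` converge weakly to the Dirac mass at the unique zero
`m★` of the mean field as `ε → 0⁺`. -/
theorem som_invariant_measures_tendsto_dirac {n : ℕ} [NeZero n] (hn : 2 ≤ n)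
    (Λ : ℕ → ℝ) (hΛanti : Antitone Λ) (hΛ0 : Λ 0 = 1)
    (hΛrange : ∀ k, Λ k ∈ Set.Icc (0 : ℝ) 1) (hHΛ : HLambda n Λ)
    (μ : Measure ℝ) [IsProbabilityMeasure μ] (f : ℝ → ℝ)
    (hdens : μ = volume.withDensity fun x => ENNReal.ofReal (f x))
    (hsupp : ∀ x, x ∉ Set.Icc (0 : ℝ) 1 → f x = 0)
    (hHμ : Hmu f)
    (mstar : Fin n → ℝ) (hmstarF : mstar ∈ Fplus n)
    (hmstarzero : meanField Λ f mstar = 0)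
    (hmstaruniq : ∀ m ∈ Fplus n, meanField Λ f m = 0 → m = mstar)
    (ν : ℝ → Measure (Fin n → ℝ))
    (hν : ∀ ε ∈ Set.Ioo (0 : ℝ) 1, IsProbabilityMeasure (ν ε) ∧
      IsSOMInvariant μ Λ ε (ν ε) ∧ ν ε (Fplus n) = 1) :
    ∀ g : BoundedContinuousFunction (Fin n → ℝ) ℝ,
      Tendsto (fun ε => ∫ m, g m ∂(ν ε)) (nhdsWithin 0 (Set.Ioi 0))
        (nhds (g mstar)) := by
  exact som_invariant_measures_tendsto_dirac_general hΛanti (hΛ0 ▸ one_pos) hΛrange hdens hsupp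
    hHμ.1 (hHμ.2.elim StrictConcaveOn.concaveOn And.left) hmstarF hmstarzero
    (eventually_of_mem (Ioo_mem_nhdsGT one_pos) hν)

end
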